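/- Let H > 0 and 0 < r < 1/(2H). Let D(r) ⊆ ℝ² be the open disk of center 0 and radius r, set z₀ = (1/(2H), 0), and define C = {p ∈ D(r) : |p − z₀| = 1/(2H)}, D⁺ = {p ∈ D(r) : |p − z₀| < 1/(2H)} (the component of D(r) \ C containing (r,0)). Let (u_n) be a sequence of solutions of (CMC) on D⁺ converging to a solution u of (CMC) on D⁺ (u_n → u and ∇u_n → ∇u uniformly on every compact subset of D⁺). Suppose that at least one of the following holds: (2a) for every n, u_n tends to +∞ at every point of C (for all P ∈ C, M ∈ ℝ there is δ > 0 with u_n > M on D⁺ ∩ B(P,δ)); or (2b) for every n, u_n is the restriction to D⁺ of a solution v_n of (CMC) on D(r), and C is a divergence line of (v_n). Then u tends to +∞ at every point of C: for every P ∈ C and M ∈ ℝ there is δ > 0 with u > M on D⁺ ∩ B(P,δ). -/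

import Mathlib

/-!
The half disk `D⁺` is `Dp R r` with `R = 1 / (2H)`; the function `qf R` is positive on it and
vanishes on the arc `C`.  A solution satisfies `div X_f = 1 / R` for the field
`X_f = ∇f / W_f = (gX f, gY f)`, which has length less than one.

*Weak boundary values.*  Solutions with boundary values `+∞` on `C` satisfy the condition
`WeakInfty`: near the arc, on the set where the solution is below a given level, `X_f` agrees with
the outward unit normal `Y` of the arc up to an error which vanishes when integrated over thinner
and thinner layers.  In case (2a) this holds for every `u_n` (`weakInfty_of_tendsto`).  In case (2b)
it holds for the limit: by the divergence theorem, the integral of the flux of `X_{v_n}` through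
`C` equals an integral over `D⁺`.  As `X_{v_n} → Y` on `C` and `X_{v_n} → X_u` in `D⁺`, dominated
convergence shows that `X_u` has the flux of `Y` through `C` in the weak sense (`flux_limit`,
`weakInfty_of_flux`).

*Comparison.*  Let `b` be a strict subsolution, bounded above, and let `f` satisfy `WeakInfty`.  The
field `X_b - X_f` has positive divergence, its product with `∇(b - f)` is nonnegative, and its flux
through `C` is at most the flux of `Y - X_f`, which vanishes.  Testing with functions of `b - f`
gives `b ≤ f` (`comparison`, `comparison_arc`).

*Barriers.*  The first barrier is `√G - k`, where `G` is a quadratic function; it extends the lower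
bound of `f` on a compact subset of `D⁺` to a neighborhood of a given point of `C` (`lower_bound`).
On the part of the boundary where `G = 0` its gradient is infinite and points into the domain, so
that no boundary values of `f` are needed there.  The second barrier is
`A log (h / (qf + κ)) - Γ |Q - P|² / 2 - k`; it is large at `P`, and lies below a given lower bound
of `f` outside a small neighborhood of `P` (`barrier_two`).  The choice `A` small makes it a strict
subsolution, because the curvature of the circles `qf = const` concentric with `C` is at least
`1 / R` on `D⁺`.  So a lower bound on a compact set forces `f > M` in a neighborhood of `P`
depending on that bound only (`arc_estimate`).

In case (2b) this estimate applies to the limit itself (`tendsto_of_weakInfty`).  In case (2a) it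
applies to the `u_n` with a common neighborhood, because the lower bounds on a compact set are
uniform in `n`, and the inequality passes to the limit (`tendsto_of_limit`).
-/

open Real MeasureTheory Filter Set

noncomputable section

/-- Euclidean norm on `ℝ × ℝ`. -/
def enorm2 (p : ℝ × ℝ) : ℝ := Real.sqrt (p.1 ^ 2 + p.2 ^ 2)

/-- Partial derivative in the `x` direction. -/
def pdx (u : ℝ × ℝ → ℝ) (p : ℝ × ℝ) : ℝ := fderiv ℝ u p (1, 0)

/-- Partial derivative in the `y` direction. -/
def pdy (u : ℝ × ℝ → ℝ) (p : ℝ × ℝ) : ℝ := fderiv ℝ u p (0, 1)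

/-- The area element `W_u = √(1 + |∇u|²)`. -/
def Wgraph (u : ℝ × ℝ → ℝ) (p : ℝ × ℝ) : ℝ :=
  Real.sqrt (1 + (pdx u p) ^ 2 + (pdy u p) ^ 2)

/-- Upward unit normal of the graph of `u`. -/
def normalVec (u : ℝ × ℝ → ℝ) (p : ℝ × ℝ) : ℝ × ℝ × ℝ :=
  (-pdx u p / Wgraph u p, -pdy u p / Wgraph u p, 1 / Wgraph u p)

/-- `u` is a (C²) solution of the constant mean curvature `H` equation on `Ω`. -/
def IsCMCSolution (H : ℝ) (Ω : Set (ℝ × ℝ)) (u : ℝ × ℝ → ℝ) : Prop :=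
  ContDiffOn ℝ 2 u Ω ∧ ∀ p ∈ Ω,
    (1 + (pdy u p) ^ 2) * pdx (fun q => pdx u q) p
      - 2 * (pdx u p) * (pdy u p) * pdy (fun q => pdx u q) p
      + (1 + (pdx u p) ^ 2) * pdy (fun q => pdy u q) p
    = 2 * H * (1 + (pdx u p) ^ 2 + (pdy u p) ^ 2) ^ ((3 : ℝ) / 2)

/-- `C` is a divergence line of the sequence `u` on `Ω`. -/
def IsDivergenceLine (H : ℝ) (Ω : Set (ℝ × ℝ)) (u : ℕ → ℝ × ℝ → ℝ)
    (C : Set (ℝ × ℝ)) : Prop :=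
  ∃ z₁ : ℝ × ℝ, C ⊆ Ω ∧ (∀ q ∈ C, enorm2 (q - z₁) = 1 / (2 * H)) ∧
    IsConnected C ∧ C.Nontrivial ∧
    ∃ φ : ℕ → ℕ, StrictMono φ ∧ ∀ Q ∈ C,
      Tendsto (fun n => normalVec (u (φ n)) Q) atTop
        (nhds (2 * H * (z₁.1 - Q.1), 2 * H * (z₁.2 - Q.2), 0))

/-! ### Partial derivatives and the divergence form of the equation -/

/-- `f` is Fréchet differentiable at `p` with partial derivatives `a` and `b`. -/
def HasPD (f : ℝ × ℝ → ℝ) (a b : ℝ) (p : ℝ × ℝ) : Prop :=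
  HasFDerivAt f (a • ContinuousLinearMap.fst ℝ ℝ ℝ + b • ContinuousLinearMap.snd ℝ ℝ ℝ) p

namespace HasPD

variable {f g : ℝ × ℝ → ℝ} {a b c d : ℝ} {p : ℝ × ℝ}

theorem pdx_eq (h : HasPD f a b p) : pdx f p = a := by
  unfold pdx; rw [HasFDerivAt.fderiv h]; simp

theorem pdy_eq (h : HasPD f a b p) : pdy f p = b := by
  unfold pdy; rw [HasFDerivAt.fderiv h]; simp

theorem differentiableAt (h : HasPD f a b p) : DifferentiableAt ℝ f p :=
  HasFDerivAt.differentiableAt h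

theorem of_differentiableAt (h : DifferentiableAt ℝ f p) : HasPD f (pdx f p) (pdy f p) p := by
  unfold HasPD
  convert h.hasFDerivAt using 1
  ext <;> simp [pdx, pdy]

theorem congr (h : HasPD f a b p) (ha : a = c) (hb : b = d) : HasPD f c d p := by
  subst ha hb; exact h

theorem const (k : ℝ) : HasPD (fun _ => k) 0 0 p := by
  unfold HasPD; simpa using hasFDerivAt_const k p

theorem fst : HasPD (fun q => q.1) 1 0 p := by
  unfold HasPD; simpa using (hasFDerivAt_fst (𝕜 := ℝ) (p := p))

theorem snd : HasPD (fun q => q.2) 0 1 p := by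
  unfold HasPD; simpa using (hasFDerivAt_snd (𝕜 := ℝ) (p := p))

theorem add (hf : HasPD f a b p) (hg : HasPD g c d p) :
    HasPD (fun q => f q + g q) (a + c) (b + d) p := by
  refine (HasFDerivAt.add hf hg).congr_fderiv ?_
  ext <;> simp

theorem sub (hf : HasPD f a b p) (hg : HasPD g c d p) :
    HasPD (fun q => f q - g q) (a - c) (b - d) p := by
  refine (HasFDerivAt.sub hf hg).congr_fderiv ?_
  ext <;> simp

theorem mul (hf : HasPD f a b p) (hg : HasPD g c d p) :
    HasPD (fun q => f q * g q) (a * g p + f p * c) (b * g p + f p * d) p := by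
  refine (HasFDerivAt.mul hf hg).congr_fderiv ?_
  ext <;> simp <;> ring

/-- Chain rule for an outer function of one real variable. -/
theorem comp (hf : HasPD f a b p) {F : ℝ → ℝ} {F' : ℝ} (hF : HasDerivAt F F' (f p)) :
    HasPD (fun q => F (f q)) (F' * a) (F' * b) p := by
  refine (hF.comp_hasFDerivAt p hf).congr_fderiv ?_
  ext <;> simp

theorem sqrt (hf : HasPD f a b p) (h : 0 < f p) :
    HasPD (fun q => √(f q)) (a / (2 * √(f p))) (b / (2 * √(f p))) p :=
  (hf.comp (Real.hasDerivAt_sqrt h.ne')).congr (by ring) (by ring)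

theorem div (hf : HasPD f a b p) (hg : HasPD g c d p) (h : g p ≠ 0) :
    HasPD (fun q => f q / g q) ((a * g p - f p * c) / g p ^ 2)
      ((b * g p - f p * d) / g p ^ 2) p := by
  have := hf.mul (hg.comp (hasDerivAt_inv h))
  simp only [← div_eq_mul_inv] at this
  refine this.congr ?_ ?_ <;> field_simp <;> ring

theorem congr_nhds (h : HasPD f a b p) (hfg : g =ᶠ[nhds p] f) : HasPD g a b p :=
  HasFDerivAt.congr_of_eventuallyEq h hfg

end HasPD

/-- The first component of the field `∇f / W_f`. -/
def gX (f : ℝ × ℝ → ℝ) (p : ℝ × ℝ) : ℝ := pdx f p / Wgraph f p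

/-- The second component of the field `∇f / W_f`. -/
def gY (f : ℝ × ℝ → ℝ) (p : ℝ × ℝ) : ℝ := pdy f p / Wgraph f p

theorem Wgraph_pos (f : ℝ × ℝ → ℝ) (p : ℝ × ℝ) : 0 < Wgraph f p :=
  Real.sqrt_pos.2 (by positivity)

theorem Wgraph_sq (f : ℝ × ℝ → ℝ) (p : ℝ × ℝ) :
    Wgraph f p ^ 2 = 1 + pdx f p ^ 2 + pdy f p ^ 2 :=
  Real.sq_sqrt (by positivity)

theorem gX_sq_add_gY_sq_le (f : ℝ × ℝ → ℝ) (p : ℝ × ℝ) : gX f p ^ 2 + gY f p ^ 2 ≤ 1 := by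
  unfold gX gY
  rw [div_pow, div_pow, ← add_div, div_le_one (by have := Wgraph_pos f p; positivity), Wgraph_sq]
  linarith

theorem contDiffOn_pdx {f : ℝ × ℝ → ℝ} {Ω : Set (ℝ × ℝ)} (hΩ : IsOpen Ω)
    (hf : ContDiffOn ℝ 2 f Ω) : ContDiffOn ℝ 1 (pdx f) Ω :=
  (hf.fderiv_of_isOpen hΩ (m := 1) (by norm_num)).clm_apply contDiffOn_const

theorem contDiffOn_pdy {f : ℝ × ℝ → ℝ} {Ω : Set (ℝ × ℝ)} (hΩ : IsOpen Ω)
    (hf : ContDiffOn ℝ 2 f Ω) : ContDiffOn ℝ 1 (pdy f) Ω :=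
  (hf.fderiv_of_isOpen hΩ (m := 1) (by norm_num)).clm_apply contDiffOn_const

theorem contDiffOn_Wgraph {f : ℝ × ℝ → ℝ} {Ω : Set (ℝ × ℝ)} (hΩ : IsOpen Ω)
    (hf : ContDiffOn ℝ 2 f Ω) : ContDiffOn ℝ 1 (Wgraph f) Ω :=
  ((contDiffOn_const.add ((contDiffOn_pdx hΩ hf).pow 2)).add ((contDiffOn_pdy hΩ hf).pow 2)).sqrt
    (fun p _ => by positivity)

theorem contDiffOn_gX {f : ℝ × ℝ → ℝ} {Ω : Set (ℝ × ℝ)} (hΩ : IsOpen Ω)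
    (hf : ContDiffOn ℝ 2 f Ω) : ContDiffOn ℝ 1 (gX f) Ω :=
  (contDiffOn_pdx hΩ hf).div (contDiffOn_Wgraph hΩ hf) (fun p _ => (Wgraph_pos f p).ne')

theorem contDiffOn_gY {f : ℝ × ℝ → ℝ} {Ω : Set (ℝ × ℝ)} (hΩ : IsOpen Ω)
    (hf : ContDiffOn ℝ 2 f Ω) : ContDiffOn ℝ 1 (gY f) Ω :=
  (contDiffOn_pdy hΩ hf).div (contDiffOn_Wgraph hΩ hf) (fun p _ => (Wgraph_pos f p).ne')

theorem ContDiffOn.hasPD {f : ℝ × ℝ → ℝ} {Ω : Set (ℝ × ℝ)} (hf : ContDiffOn ℝ 1 f Ω)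
    (hΩ : IsOpen Ω) {p : ℝ × ℝ} (hp : p ∈ Ω) : HasPD f (pdx f p) (pdy f p) p :=
  HasPD.of_differentiableAt ((hf.differentiableOn (by norm_num)).differentiableAt (hΩ.mem_nhds hp))

theorem pdx_pdy_comm {f : ℝ × ℝ → ℝ} {Ω : Set (ℝ × ℝ)} (hΩ : IsOpen Ω)
    (hf : ContDiffOn ℝ 2 f Ω) {p : ℝ × ℝ} (hp : p ∈ Ω) :
    pdx (pdy f) p = pdy (pdx f) p := by
  have hs : IsSymmSndFDerivAt ℝ f p :=
    (hf.contDiffAt (hΩ.mem_nhds hp)).isSymmSndFDerivAt (by simp)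
  have hd : DifferentiableAt ℝ (fderiv ℝ f) p :=
    ((hf.fderiv_of_isOpen hΩ (m := 1) (by norm_num)).differentiableOn (by norm_num)).differentiableAt
      (hΩ.mem_nhds hp)
  have h1 : pdx (pdy f) p = fderiv ℝ (fderiv ℝ f) p (1, 0) (0, 1) := by
    unfold pdx pdy
    rw [fderiv_clm_apply hd (differentiableAt_const _)]; simp
  have h2 : pdy (pdx f) p = fderiv ℝ (fderiv ℝ f) p (0, 1) (1, 0) := by
    unfold pdx pdy
    rw [fderiv_clm_apply hd (differentiableAt_const _)]; simp
  rw [h1, h2, hs]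

/-- Divergence form of the equation: `div (P / W, Q / W)` for `W = √(1 + P² + Q²)`. -/
theorem div_normalized {P Q : ℝ × ℝ → ℝ} {Px Py Qx Qy : ℝ} {p : ℝ × ℝ}
    (hP : HasPD P Px Py p) (hQ : HasPD Q Qx Qy p) :
    pdx (fun q => P q / √(1 + P q ^ 2 + Q q ^ 2)) p
      + pdy (fun q => Q q / √(1 + P q ^ 2 + Q q ^ 2)) p
      = ((1 + Q p ^ 2) * Px - P p * Q p * (Py + Qx) + (1 + P p ^ 2) * Qy)
        / √(1 + P p ^ 2 + Q p ^ 2) ^ 3 := by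
  have hpos : 0 < 1 + P p ^ 2 + Q p ^ 2 := by positivity
  have hW : HasPD (fun q => √(1 + P q ^ 2 + Q q ^ 2))
      ((P p * Px + Q p * Qx) / √(1 + P p ^ 2 + Q p ^ 2))
      ((P p * Py + Q p * Qy) / √(1 + P p ^ 2 + Q p ^ 2)) p := by
    have h := (((HasPD.const (p := p) 1).add (hP.comp (hasDerivAt_pow 2 (P p)))).add
      (hQ.comp (hasDerivAt_pow 2 (Q p)))).sqrt hpos
    refine h.congr ?_ ?_ <;> · field_simp; push_cast; ring
  have hWp : 0 < √(1 + P p ^ 2 + Q p ^ 2) := Real.sqrt_pos.2 hpos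
  rw [(hP.div hW hWp.ne').pdx_eq, (hQ.div hW hWp.ne').pdy_eq]
  have hsq : √(1 + P p ^ 2 + Q p ^ 2) ^ 2 = 1 + P p ^ 2 + Q p ^ 2 := Real.sq_sqrt hpos.le
  set w := √(1 + P p ^ 2 + Q p ^ 2)
  field_simp
  rw [hsq]; ring

theorem div_grad_eq {H : ℝ} {f : ℝ × ℝ → ℝ} {Ω : Set (ℝ × ℝ)} (hΩ : IsOpen Ω)
    (hf : IsCMCSolution H Ω f) {p : ℝ × ℝ} (hp : p ∈ Ω) :
    pdx (gX f) p + pdy (gY f) p = 2 * H := by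
  have h := div_normalized ((contDiffOn_pdx hΩ hf.1).hasPD hΩ hp)
    ((contDiffOn_pdy hΩ hf.1).hasPD hΩ hp)
  have he := hf.2 p hp
  have hW := Wgraph_pos f p
  have h3 : (1 + pdx f p ^ 2 + pdy f p ^ 2) ^ ((3 : ℝ) / 2) = Wgraph f p ^ 3 := by
    have h0 : 0 ≤ 1 + pdx f p ^ 2 + pdy f p ^ 2 := by positivity
    rw [Wgraph]
    generalize 1 + pdx f p ^ 2 + pdy f p ^ 2 = s at h0
    rw [Real.sqrt_eq_rpow, ← Real.rpow_natCast (s ^ (1 / 2 : ℝ)) 3, ← Real.rpow_mul h0]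
    norm_num
  rw [h3] at he
  refine (h.trans ?_ : pdx (fun q => gX f q) p + pdy (fun q => gY f q) p = 2 * H)
  rw [pdx_pdy_comm hΩ hf.1 hp]
  change _ / Wgraph f p ^ 3 = _
  rw [div_eq_iff (by positivity), ← he]
  ring

/-- Monotonicity of `∇ ↦ ∇ / √(1 + |∇|²)`. -/
theorem grad_monotone (a b c d : ℝ) :
    0 ≤ (a / √(1 + a ^ 2 + b ^ 2) - c / √(1 + c ^ 2 + d ^ 2)) * (a - c)
      + (b / √(1 + a ^ 2 + b ^ 2) - d / √(1 + c ^ 2 + d ^ 2)) * (b - d) := by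
  have h1 : 0 < √(1 + a ^ 2 + b ^ 2) := Real.sqrt_pos.2 (by positivity)
  have h2 : 0 < √(1 + c ^ 2 + d ^ 2) := Real.sqrt_pos.2 (by positivity)
  have e1 : √(1 + a ^ 2 + b ^ 2) ^ 2 = 1 + a ^ 2 + b ^ 2 := Real.sq_sqrt (by positivity)
  have e2 : √(1 + c ^ 2 + d ^ 2) ^ 2 = 1 + c ^ 2 + d ^ 2 := Real.sq_sqrt (by positivity)
  set w := √(1 + a ^ 2 + b ^ 2)
  set z := √(1 + c ^ 2 + d ^ 2)
  have hcs : 1 + a * c + b * d ≤ w * z := by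
    refine le_of_sq_le_sq ?_ (by positivity)
    rw [mul_pow, e1, e2]
    nlinarith [sq_nonneg (a - c), sq_nonneg (b - d), sq_nonneg (a * d - b * c)]
  have : (a / w - c / z) * (a - c) + (b / w - d / z) * (b - d)
      = (w + z) * (w * z - (1 + a * c + b * d)) / (w * z) := by
    field_simp
    linear_combination (-z) * e1 - w * e2
  rw [this]
  exact div_nonneg (mul_nonneg (by positivity) (by linarith)) (by positivity)

/-- Divergence theorem for compactly supported fields in the plane. -/
theorem integral_div_eq_zero {Z₁ Z₂ : ℝ × ℝ → ℝ} (h₁ : ContDiff ℝ 1 Z₁) (h₂ : ContDiff ℝ 1 Z₂)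
    (c₁ : HasCompactSupport Z₁) (c₂ : HasCompactSupport Z₂) :
    Integrable (fun p => pdx Z₁ p + pdy Z₂ p) ∧ ∫ p, (pdx Z₁ p + pdy Z₂ p) = 0 := by
  have key : ∀ (Z : ℝ × ℝ → ℝ) (e : ℝ × ℝ), ContDiff ℝ 1 Z → HasCompactSupport Z →
      Integrable (fun p => fderiv ℝ Z p e) ∧ ∫ p, fderiv ℝ Z p e = 0 := by
    intro Z e hZ cZ
    have hc : Continuous (fun p => fderiv ℝ Z p e) :=
      (hZ.continuous_fderiv (by norm_num)).clm_apply continuous_const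
    have hi : Integrable (fun p => fderiv ℝ Z p e) :=
      hc.integrable_of_hasCompactSupport (cZ.fderiv_apply ℝ e)
    refine ⟨hi, ?_⟩
    have := integral_mul_fderiv_eq_neg_fderiv_mul_of_integrable (𝕜 := ℝ) (μ := volume)
      (f := fun _ : ℝ × ℝ => (1 : ℝ)) (g := Z) (v := e) (by simp) (by simpa using hi)
      (by simpa using hZ.continuous.integrable_of_hasCompactSupport cZ)
      (fun x _ => differentiableAt_const _) (fun x _ => hZ.differentiable (by norm_num) x)
    simpa using this
  obtain ⟨i1, e1⟩ := key Z₁ (1, 0) h₁ c₁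
  obtain ⟨i2, e2⟩ := key Z₂ (0, 1) h₂ c₂
  refine ⟨i1.add i2, ?_⟩
  exact (integral_add i1 i2).trans (by rw [e1, e2, add_zero])

/-! ### Cutoff functions -/

theorem deriv_smoothTransition_nonneg (t : ℝ) : 0 ≤ deriv Real.smoothTransition t :=
  Real.smoothTransition.monotone.deriv_nonneg

theorem hasDerivAt_smoothTransition (t : ℝ) :
    HasDerivAt Real.smoothTransition (deriv Real.smoothTransition t) t :=
  ((Real.smoothTransition.contDiff (n := 1)).differentiable (by norm_num) t).hasDerivAt

theorem deriv_smoothTransition_of_ge {t : ℝ} (ht : 1 ≤ t) : deriv Real.smoothTransition t = 0 := by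
  apply IsLocalMax.deriv_eq_zero
  filter_upwards with s
  rw [Real.smoothTransition.one_of_one_le ht]
  exact Real.smoothTransition.le_one s

theorem deriv_smoothTransition_of_le {t : ℝ} (ht : t ≤ 0) : deriv Real.smoothTransition t = 0 := by
  apply IsLocalMin.deriv_eq_zero
  filter_upwards with s
  rw [Real.smoothTransition.zero_of_nonpos ht]
  exact Real.smoothTransition.nonneg s

theorem continuous_deriv_smoothTransition : Continuous (deriv Real.smoothTransition) :=
  (Real.smoothTransition.contDiff (n := 1)).continuous_deriv (by norm_num)

theorem exists_deriv_smoothTransition_le :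
    ∃ B : ℝ, 0 ≤ B ∧ ∀ t, deriv Real.smoothTransition t ≤ B := by
  obtain ⟨B, hB⟩ := (isCompact_Icc (a := (0 : ℝ)) (b := 1)).bddAbove_image
    continuous_deriv_smoothTransition.continuousOn
  have h0 : (0 : ℝ) ≤ B :=
    (deriv_smoothTransition_nonneg 0).trans (hB ⟨0, by simp, rfl⟩)
  refine ⟨B, h0, fun t => ?_⟩
  rcases le_or_gt t 0 with h | h
  · rw [deriv_smoothTransition_of_le h]; exact h0
  rcases le_or_gt 1 t with h' | h'
  · rw [deriv_smoothTransition_of_ge h']; exact h0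
  · exact hB ⟨t, ⟨h.le, h'.le⟩, rfl⟩

/-- Smooth nondecreasing cutoff equal to `0` on `(-∞, e]` and to `1` on `[2e, ∞)`. -/
def cut (e t : ℝ) : ℝ := Real.smoothTransition (t / e - 1)

/-- The derivative of `cut e`. -/
def cut' (e t : ℝ) : ℝ := deriv Real.smoothTransition (t / e - 1) / e

theorem hasDerivAt_cut (e t : ℝ) : HasDerivAt (cut e) (cut' e t) t := by
  have h : HasDerivAt (fun s : ℝ => s / e - 1) (1 / e) t :=
    ((hasDerivAt_id t).div_const e).sub_const 1
  have := (hasDerivAt_smoothTransition (t / e - 1)).comp t h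
  rw [mul_one_div] at this
  exact this

theorem contDiff_cut (e : ℝ) : ContDiff ℝ 1 (cut e) :=
  (Real.smoothTransition.contDiff (n := 1)).comp ((contDiff_id.div_const e).sub contDiff_const)

theorem continuous_cut' (e : ℝ) : Continuous (cut' e) := by
  unfold cut'
  exact (continuous_deriv_smoothTransition.comp (by fun_prop)).div_const e

theorem cut_nonneg (e t : ℝ) : 0 ≤ cut e t := Real.smoothTransition.nonneg _

theorem cut_le_one (e t : ℝ) : cut e t ≤ 1 := Real.smoothTransition.le_one _

theorem cut'_nonneg {e : ℝ} (he : 0 < e) (t : ℝ) : 0 ≤ cut' e t :=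
  div_nonneg (deriv_smoothTransition_nonneg _) he.le

theorem cut_eq_zero {e t : ℝ} (he : 0 < e) (h : t ≤ e) : cut e t = 0 :=
  Real.smoothTransition.zero_of_nonpos (by rw [sub_nonpos, div_le_one he]; exact h)

theorem cut_eq_one {e t : ℝ} (he : 0 < e) (h : 2 * e ≤ t) : cut e t = 1 :=
  Real.smoothTransition.one_of_one_le (by rw [le_sub_iff_add_le, le_div_iff₀ he]; linarith)

theorem cut'_eq_zero {e t : ℝ} (he : 0 < e) (h : 2 * e ≤ t) : cut' e t = 0 := by
  unfold cut'
  rw [deriv_smoothTransition_of_ge (by rw [le_sub_iff_add_le, le_div_iff₀ he]; linarith), zero_div]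

/-- Scale-invariant bound on the slope of the cutoff. -/
theorem cut'_mul_le {B e t : ℝ} (hB : ∀ t, deriv Real.smoothTransition t ≤ B) (hB0 : 0 ≤ B)
    (he : 0 < e) (ht : 0 ≤ t) : cut' e t * t ≤ if t < 2 * e then 2 * B else 0 := by
  split_ifs with h
  · have h1 : cut' e t * t = deriv Real.smoothTransition (t / e - 1) * (t / e) := by
      unfold cut'; ring
    rw [h1, mul_comm 2 B]
    exact mul_le_mul (hB _) (by rw [div_le_iff₀ he]; exact h.le) (by positivity) hB0
  · rw [cut'_eq_zero he (not_lt.1 h), zero_mul]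

/-! ### The comparison principle -/

theorem contDiff_indicator_of_compact {D K : Set (ℝ × ℝ)} (hD : IsOpen D) (hK : IsCompact K)
    (hKD : K ⊆ D) {F : ℝ × ℝ → ℝ} (hF : ContDiffOn ℝ 1 F D) (h0 : ∀ p ∈ D, p ∉ K → F p = 0) :
    ContDiff ℝ 1 (D.indicator F) ∧ HasCompactSupport (D.indicator F) := by
  have hz : ∀ p ∉ K, D.indicator F p = 0 := by
    intro p hp
    by_cases h : p ∈ D
    · rw [indicator_of_mem h, h0 p h hp]
    · exact indicator_of_notMem h F
  refine ⟨contDiff_iff_contDiffAt.2 fun p => ?_, HasCompactSupport.intro hK hz⟩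
  by_cases hp : p ∈ D
  · refine (hF.contDiffAt (hD.mem_nhds hp)).congr_of_eventuallyEq ?_
    filter_upwards [hD.mem_nhds hp] with q hq using indicator_of_mem hq F
  · have hp' : p ∈ Kᶜ := fun h => hp (hKD h)
    refine (contDiffAt_const (c := (0 : ℝ))).congr_of_eventuallyEq ?_
    filter_upwards [hK.isClosed.isOpen_compl.mem_nhds hp'] with q hq using hz q hq

/-- The layers `{g < 2 / (k + 1)}` next to the zero set of a positive function have
measure tending to zero. -/
theorem tendsto_layer {D : Set (ℝ × ℝ)} (hD : IsOpen D) (hbd : Bornology.IsBounded D)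
    {g : ℝ × ℝ → ℝ} (hg : ContinuousOn g D) (hpos : ∀ p ∈ D, 0 < g p) :
    (∀ k : ℕ, MeasurableSet (D ∩ {p | g p < 2 * (1 / ((k : ℝ) + 1))})) ∧
    Tendsto (fun k : ℕ => volume.real (D ∩ {p | g p < 2 * (1 / ((k : ℝ) + 1))})) atTop (nhds 0) := by
  have hm : ∀ k : ℕ, MeasurableSet (D ∩ {p | g p < 2 * (1 / ((k : ℝ) + 1))}) := fun k =>
    (hg.isOpen_inter_preimage hD isOpen_Iio).measurableSet
  refine ⟨hm, ?_⟩
  have hfin : ∀ k : ℕ, volume (D ∩ {p | g p < 2 * (1 / ((k : ℝ) + 1))}) ≠ ⊤ := fun k =>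
    (hbd.subset inter_subset_left).measure_lt_top.ne
  have ha : Antitone (fun k : ℕ => D ∩ {p | g p < 2 * (1 / ((k : ℝ) + 1))}) := by
    intro k l hkl p hp
    have hp2 : g p < 2 * (1 / ((l : ℝ) + 1)) := hp.2
    refine ⟨hp.1, show g p < 2 * (1 / ((k : ℝ) + 1)) from lt_of_lt_of_le hp2 ?_⟩
    have : (k : ℝ) ≤ l := by exact_mod_cast hkl
    gcongr
  have h := tendsto_measure_iInter_atTop (μ := volume)
    (fun k => (hm k).nullMeasurableSet) ha ⟨0, hfin 0⟩
  have he : ⋂ k : ℕ, (D ∩ {p | g p < 2 * (1 / ((k : ℝ) + 1))}) = ∅ := by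
    ext p
    simp only [mem_iInter, mem_empty_iff_false, iff_false, not_forall]
    by_cases hp : p ∈ D
    · obtain ⟨k, hk⟩ := exists_nat_one_div_lt (half_pos (hpos p hp))
      exact ⟨k, fun h => by have : g p < 2 * (1 / ((k : ℝ) + 1)) := h.2; linarith⟩
    · exact ⟨0, fun h => hp h.1⟩
  rw [he, measure_empty] at h
  have := (ENNReal.tendsto_toReal ENNReal.zero_ne_top).comp h
  simpa [Measure.real, Function.comp_def] using this

/-- Comparison principle with an asymptotic boundary condition.  The field
`χ(b - f) · cut(g) · cut(q) · (X_f - X_b)` has compact support in `D`, so its divergence has zero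
integral; the terms produced by the two cutoffs are controlled by `hgC` on the part `{g = 0}` of
the boundary and by `T` on the part `{q = 0}`. -/
theorem comparison {c C : ℝ} {D : Set (ℝ × ℝ)} (hD : IsOpen D) (hbd : Bornology.IsBounded D)
    {f b g q : ℝ × ℝ → ℝ} (hf : ContDiffOn ℝ 2 f D)
    (hdf : ∀ p ∈ D, pdx (gX f) p + pdy (gY f) p = c)
    (hb : ContDiffOn ℝ 2 b D) (hdb : ∀ p ∈ D, c < pdx (gX b) p + pdy (gY b) p)
    (hg : ContDiffOn ℝ 1 g D) (gpos : ∀ p ∈ D, 0 < g p) (hC : 0 ≤ C)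
    (hgC : ∀ p ∈ D, (gX f p - gX b p) * pdx g p + (gY f p - gY b p) * pdy g p ≤ C * g p)
    (hq : ContDiffOn ℝ 1 q D) (qpos : ∀ p ∈ D, 0 < q p)
    (hK : ∀ e > 0, ∃ K ⊆ D, IsCompact K ∧ ∀ p ∈ D, f p < b p → e ≤ g p → e ≤ q p → p ∈ K)
    {T : ℕ → ℝ × ℝ → ℝ} (T0 : ∀ k p, 0 ≤ T k p) (Ti : ∀ k, Integrable (T k))
    (Tl : Tendsto (fun k => ∫ p, T k p) atTop (nhds 0))
    (hT : ∀ᶠ k : ℕ in atTop, ∀ p ∈ D, f p < b p → cut' (1 / ((k : ℝ) + 1)) (q p) *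
      ((gX f p - gX b p) * pdx q p + (gY f p - gY b p) * pdy q p) ≤ T k p) :
    ∀ p ∈ D, b p ≤ f p := by
  by_contra! hcon
  obtain ⟨Q, hQ, hlt⟩ := hcon
  obtain ⟨B, hB0, hB⟩ := exists_deriv_smoothTransition_le
  set χ := Real.smoothTransition with hχ
  have cf := hf.of_le (m := 1) (by norm_num)
  have cb := hb.of_le (m := 1) (by norm_num)
  have cgXf := contDiffOn_gX hD hf
  have cgYf := contDiffOn_gY hD hf
  have cgXb := contDiffOn_gX hD hb
  have cgYb := contDiffOn_gY hD hb
  have cont_pdx : ∀ {F : ℝ × ℝ → ℝ}, ContDiffOn ℝ 1 F D → ContinuousOn (pdx F) D := fun hF =>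
    (hF.continuousOn_fderiv_of_isOpen hD (by norm_num)).clm_apply continuousOn_const
  have cont_pdy : ∀ {F : ℝ × ℝ → ℝ}, ContDiffOn ℝ 1 F D → ContinuousOn (pdy F) D := fun hF =>
    (hF.continuousOn_fderiv_of_isOpen hD (by norm_num)).clm_apply continuousOn_const
  -- on a fixed ball around `Q` the favourable term has a positive lower bound
  let Ψ : ℝ × ℝ → ℝ := fun p => χ (b p - f p) * (pdx (gX b) p + pdy (gY b) p - c)
  have hΨc : ContinuousOn Ψ D :=
    ((Real.smoothTransition.continuous).comp_continuousOn
      (cb.continuousOn.sub cf.continuousOn)).mul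
      (((cont_pdx cgXb).add (cont_pdy cgYb)).sub continuousOn_const)
  have hΨQ : 0 < Ψ Q := mul_pos (Real.smoothTransition.pos_of_pos (by linarith))
    (by have := hdb Q hQ; linarith)
  have hev : ∀ᶠ p in nhds Q, p ∈ D ∧ Ψ Q / 2 < Ψ p ∧ g Q / 2 < g p ∧ q Q / 2 < q p := by
    have hn := hD.mem_nhds hQ
    have h1 := (hΨc.continuousAt hn).eventually (lt_mem_nhds (half_lt_self hΨQ))
    have h2 := (hg.continuousOn.continuousAt hn).eventually
      (lt_mem_nhds (half_lt_self (gpos Q hQ)))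
    have h3 := (hq.continuousOn.continuousAt hn).eventually
      (lt_mem_nhds (half_lt_self (qpos Q hQ)))
    filter_upwards [hn, h1, h2, h3] with p a b c d using ⟨a, b, c, d⟩
  obtain ⟨ρ, hρ, hball⟩ := Metric.eventually_nhds_iff_ball.1 hev
  set κ := Ψ Q / 2 with hκ
  have hκ0 : 0 < κ := half_pos hΨQ
  obtain ⟨hLm, hLt⟩ := tendsto_layer hD hbd hg.continuousOn gpos
  -- the integrated inequality for one value of the cutoff scale
  have main : ∀ᶠ k : ℕ in atTop, κ * volume.real (Metric.ball Q ρ)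
      ≤ 2 * B * C * volume.real (D ∩ {p | g p < 2 * (1 / ((k : ℝ) + 1))}) + ∫ p, T k p := by
    have hsmall : ∀ᶠ k : ℕ in atTop, 1 / ((k : ℝ) + 1) < min (g Q) (q Q) / 4 :=
      (tendsto_one_div_add_atTop_nhds_zero_nat (𝕜 := ℝ)).eventually
        (gt_mem_nhds (by have := gpos Q hQ; have := qpos Q hQ; positivity))
    filter_upwards [hT, hsmall] with k hTk hsm
    have he : (0 : ℝ) < 1 / ((k : ℝ) + 1) := by positivity
    set e := 1 / ((k : ℝ) + 1) with hedef
    have hg4 : 2 * e ≤ g Q / 2 := by have := min_le_left (g Q) (q Q); linarith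
    have hq4 : 2 * e ≤ q Q / 2 := by have := min_le_right (g Q) (q Q); linarith
    obtain ⟨K, hKD, hKc, hKm⟩ := hK e he
    let φ : ℝ × ℝ → ℝ := fun p => χ (b p - f p) * cut e (g p) * cut e (q p)
    have cφ : ContDiffOn ℝ 1 φ D :=
      (((Real.smoothTransition.contDiff (n := 1)).comp_contDiffOn (cb.sub cf)).mul
        ((contDiff_cut e).comp_contDiffOn hg)).mul ((contDiff_cut e).comp_contDiffOn hq)
    have φ0 : ∀ p ∈ D, p ∉ K → φ p = 0 := by
      intro p hp hpK
      by_contra hne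
      apply hpK
      refine hKm p hp ?_ ?_ ?_
      · by_contra h
        exact hne (by simp only [φ]; rw [hχ, Real.smoothTransition.zero_of_nonpos (by linarith)]; ring)
      · by_contra h
        exact hne (by simp only [φ]; rw [cut_eq_zero he (t := g p) (by linarith)]; ring)
      · by_contra h
        exact hne (by simp only [φ]; rw [cut_eq_zero he (t := q p) (by linarith)]; ring)
    let F₁ : ℝ × ℝ → ℝ := fun p => φ p * (gX f p - gX b p)
    let F₂ : ℝ × ℝ → ℝ := fun p => φ p * (gY f p - gY b p)
    obtain ⟨s1, k1⟩ := contDiff_indicator_of_compact hD hKc hKD (F := F₁)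
      (cφ.mul (cgXf.sub cgXb)) (fun p hp h => by simp only [F₁]; rw [φ0 p hp h, zero_mul])
    obtain ⟨s2, k2⟩ := contDiff_indicator_of_compact hD hKc hKD (F := F₂)
      (cφ.mul (cgYf.sub cgYb)) (fun p hp h => by simp only [F₂]; rw [φ0 p hp h, zero_mul])
    obtain ⟨ii, iz⟩ := integral_div_eq_zero s1 s2 k1 k2
    have hpt : ∀ p, (Metric.ball Q ρ).indicator (fun _ => κ) p
        ≤ -(pdx (D.indicator F₁) p + pdy (D.indicator F₂) p)
          + ((D ∩ {p | g p < 2 * e}).indicator (fun _ => 2 * B * C) p + T k p) := by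
      intro p
      by_cases hp : p ∈ D
      · -- the product rule
        have hfp := cf.hasPD hD hp
        have hbp := cb.hasPD hD hp
        have hφ : HasPD φ _ _ p :=
          (((hbp.sub hfp).comp (hasDerivAt_smoothTransition (b p - f p))).mul
            ((hg.hasPD hD hp).comp (hasDerivAt_cut e (g p)))).mul
            ((hq.hasPD hD hp).comp (hasDerivAt_cut e (q p)))
        have hev1 : ∀ {F : ℝ × ℝ → ℝ}, D.indicator F =ᶠ[nhds p] F := by
          intro F
          filter_upwards [hD.mem_nhds hp] with x hx using indicator_of_mem hx F
        have hF1 : HasPD F₁ _ _ p := hφ.mul ((cgXf.hasPD hD hp).sub (cgXb.hasPD hD hp))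
        have hF2 : HasPD F₂ _ _ p := hφ.mul ((cgYf.hasPD hD hp).sub (cgYb.hasPD hD hp))
        rw [(hF1.congr_nhds hev1).pdx_eq, (hF2.congr_nhds hev1).pdy_eq]
        have hmono : 0 ≤ (gX f p - gX b p) * (pdx f p - pdx b p)
            + (gY f p - gY b p) * (pdy f p - pdy b p) :=
          grad_monotone (pdx f p) (pdy f p) (pdx b p) (pdy b p)
        have hdfp := hdf p hp
        have hdbp := hdb p hp
        have hχ0 : 0 ≤ χ (b p - f p) := Real.smoothTransition.nonneg _
        have hχ1 : χ (b p - f p) ≤ 1 := Real.smoothTransition.le_one _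
        have hχ' : 0 ≤ deriv χ (b p - f p) := deriv_smoothTransition_nonneg _
        have g0 := cut_nonneg e (g p)
        have g1 := cut_le_one e (g p)
        have q0 := cut_nonneg e (q p)
        have q1 := cut_le_one e (q p)
        -- the contribution of the cutoff in `g`
        have hgterm : χ (b p - f p) * cut e (q p) * (cut' e (g p) *
            ((gX f p - gX b p) * pdx g p + (gY f p - gY b p) * pdy g p))
            ≤ (D ∩ {p | g p < 2 * e}).indicator (fun _ => 2 * B * C) p := by
          have h1 : cut' e (g p) *
              ((gX f p - gX b p) * pdx g p + (gY f p - gY b p) * pdy g p)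
              ≤ C * (cut' e (g p) * g p) := by
            have := mul_le_mul_of_nonneg_left (hgC p hp) (cut'_nonneg he (g p))
            linarith
          have h2 := cut'_mul_le hB hB0 he (gpos p hp).le
          have h3 : C * (cut' e (g p) * g p)
              ≤ (D ∩ {p | g p < 2 * e}).indicator (fun _ => 2 * B * C) p := by
            by_cases hlt : g p < 2 * e
            · rw [indicator_of_mem (show p ∈ D ∩ {p | g p < 2 * e} from ⟨hp, hlt⟩)]
              rw [if_pos hlt] at h2
              nlinarith
            · rw [indicator_of_notMem (fun h => hlt h.2)]
              rw [if_neg hlt] at h2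
              nlinarith
          have h4 : 0 ≤ (D ∩ {p | g p < 2 * e}).indicator (fun _ => 2 * B * C) p :=
            indicator_nonneg (fun _ _ => by positivity) p
          have h5 : χ (b p - f p) * cut e (q p) ≤ 1 := mul_le_one₀ hχ1 q0 q1
          calc _ ≤ χ (b p - f p) * cut e (q p) *
              (D ∩ {p | g p < 2 * e}).indicator (fun _ => 2 * B * C) p :=
                mul_le_mul_of_nonneg_left (h1.trans h3) (mul_nonneg hχ0 q0)
            _ ≤ 1 * _ := mul_le_mul_of_nonneg_right h5 h4
            _ = _ := one_mul _
        -- the contribution of the cutoff in `q`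
        have hqterm : χ (b p - f p) * cut e (g p) * (cut' e (q p) *
            ((gX f p - gX b p) * pdx q p + (gY f p - gY b p) * pdy q p)) ≤ T k p := by
          by_cases hlt : f p < b p
          · have h5 : χ (b p - f p) * cut e (g p) ≤ 1 := mul_le_one₀ hχ1 g0 g1
            calc _ ≤ χ (b p - f p) * cut e (g p) * T k p :=
                  mul_le_mul_of_nonneg_left (hTk p hp hlt) (mul_nonneg hχ0 g0)
              _ ≤ 1 * T k p := mul_le_mul_of_nonneg_right h5 (T0 k p)
              _ = _ := one_mul _
          · rw [hχ, Real.smoothTransition.zero_of_nonpos (by linarith)]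
            simpa using T0 k p
        have hmain : (Metric.ball Q ρ).indicator (fun _ => κ) p
            ≤ φ p * (pdx (gX b) p + pdy (gY b) p - c) := by
          by_cases hpb : p ∈ Metric.ball Q ρ
          · rw [indicator_of_mem hpb]
            obtain ⟨-, h1, h2, h3⟩ := hball p hpb
            simp only [φ]
            rw [cut_eq_one he (t := g p) (by linarith), cut_eq_one he (t := q p) (by linarith)]
            simp only [Ψ] at h1
            linarith
          · rw [indicator_of_notMem hpb]
            exact mul_nonneg (mul_nonneg (mul_nonneg hχ0 g0) q0) (by linarith)
        have hm2 : 0 ≤ deriv χ (b p - f p) * cut e (g p) * cut e (q p) *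
            ((gX f p - gX b p) * (pdx f p - pdx b p)
            + (gY f p - gY b p) * (pdy f p - pdy b p)) :=
          mul_nonneg (mul_nonneg (mul_nonneg hχ' g0) q0) hmono
        have hdiv2 : φ p * (pdx (gX b) p + pdy (gY b) p - c) =
            φ p * (pdx (gX b) p + pdy (gY b) p - (pdx (gX f) p + pdy (gY f) p)) := by rw [hdfp]
        rw [hdiv2] at hmain
        linarith
      · have hpK : p ∈ Kᶜ := fun h => hp (hKD h)
        have hev0 : ∀ {F : ℝ × ℝ → ℝ}, (∀ p ∈ D, p ∉ K → F p = 0) →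
            D.indicator F =ᶠ[nhds p] fun _ => 0 := by
          intro F hF
          filter_upwards [hKc.isClosed.isOpen_compl.mem_nhds hpK] with x hx
          by_cases hxD : x ∈ D
          · rw [indicator_of_mem hxD, hF x hxD hx]
          · exact indicator_of_notMem hxD F
        rw [((HasPD.const 0).congr_nhds (hev0 (F := F₁) fun p hp h => by
            simp only [F₁]; rw [φ0 p hp h, zero_mul])).pdx_eq,
          ((HasPD.const 0).congr_nhds (hev0 (F := F₂) fun p hp h => by
            simp only [F₂]; rw [φ0 p hp h, zero_mul])).pdy_eq,
          indicator_of_notMem (fun h => hp (hball p h).1),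
          indicator_of_notMem (fun h => hp h.1)]
        simpa using T0 k p
    have hLfin : volume (D ∩ {p | g p < 2 * e}) ≠ ⊤ :=
      (hbd.subset inter_subset_left).measure_lt_top.ne
    have i1 : Integrable ((Metric.ball Q ρ).indicator (fun _ => κ)) :=
      (integrable_indicator_iff measurableSet_ball).2
        (integrableOn_const (measure_ball_lt_top.ne))
    have i2 : Integrable ((D ∩ {p | g p < 2 * e}).indicator (fun _ => 2 * B * C)) :=
      (integrable_indicator_iff (hLm k)).2 (integrableOn_const hLfin)
    have hmono := integral_mono i1 (ii.neg.add (i2.add (Ti k))) hpt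
    rw [integral_add' ii.neg (i2.add (Ti k)), integral_neg', iz, integral_add' i2 (Ti k),
      integral_indicator_const _ measurableSet_ball, integral_indicator_const _ (hLm k)] at hmono
    simp only [smul_eq_mul] at hmono
    linarith
  have hlim : Tendsto (fun k : ℕ => 2 * B * C *
      volume.real (D ∩ {p | g p < 2 * (1 / ((k : ℝ) + 1))}) + ∫ p, T k p) atTop (nhds 0) := by
    simpa using (hLt.const_mul (2 * B * C)).add Tl
  have := ge_of_tendsto hlim main
  have hv : 0 < volume.real (Metric.ball Q ρ) :=
    ENNReal.toReal_pos (Metric.measure_ball_pos volume Q hρ).ne' measure_ball_lt_top.ne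
  have := mul_pos hκ0 hv
  linarith

/-! ### Divergence theorem on the convex side of the arc -/

/-- The open disk of radius `r` about the origin. -/
def Dk (r : ℝ) : Set (ℝ × ℝ) := {p | p.1 ^ 2 + p.2 ^ 2 < r ^ 2}

/-- Power of `p` with respect to the circle of radius `R` about `(R, 0)`, with the sign chosen to
be positive inside. -/
def qf (R : ℝ) (p : ℝ × ℝ) : ℝ := R ^ 2 - ((p.1 - R) ^ 2 + p.2 ^ 2)

/-- The part of the disk `Dk r` inside the circle of radius `R` about `(R, 0)`. -/
def Dp (R r : ℝ) : Set (ℝ × ℝ) := {p | p ∈ Dk r ∧ 0 < qf R p}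

/-- The circle of radius `R` about `(R, 0)` near the origin, as a graph over the `y`-axis. -/
def gam (R y : ℝ) : ℝ := R - √(R ^ 2 - y ^ 2)

/-- The derivative of `gam R`. -/
def gam' (R y : ℝ) : ℝ := y / √(R ^ 2 - y ^ 2)

theorem continuous_qf (R : ℝ) : Continuous (qf R) := by unfold qf; fun_prop

theorem contDiff_qf (R : ℝ) : ContDiff ℝ 1 (qf R) := by unfold qf; fun_prop

theorem isOpen_Dk (r : ℝ) : IsOpen (Dk r) := isOpen_lt (by fun_prop) (by fun_prop)

theorem isOpen_Dp (R r : ℝ) : IsOpen (Dp R r) :=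
  (isOpen_Dk r).inter (isOpen_lt continuous_const (continuous_qf R))

theorem Dp_subset (R r : ℝ) : Dp R r ⊆ Dk r := fun _ h => h.1

theorem isBounded_Dk (r : ℝ) : Bornology.IsBounded (Dk r) := by
  refine (Metric.isBounded_closedBall (x := (0 : ℝ × ℝ)) (r := |r|)).subset fun p hp => ?_
  have hp : p.1 ^ 2 + p.2 ^ 2 < r ^ 2 := hp
  rw [mem_closedBall_zero_iff, Prod.norm_def]
  refine max_le (sq_le_sq.1 ?_) (sq_le_sq.1 ?_) <;> nlinarith [sq_nonneg p.1, sq_nonneg p.2]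

theorem hasPD_qf (R : ℝ) (p : ℝ × ℝ) : HasPD (qf R) (-2 * (p.1 - R)) (-2 * p.2) p := by
  have h := (HasPD.const (p := p) (R ^ 2)).sub
    (((HasPD.fst.sub (HasPD.const R)).comp (hasDerivAt_pow 2 (p.1 - R))).add
      ((HasPD.snd (p := p)).comp (hasDerivAt_pow 2 p.2)))
  refine h.congr ?_ ?_ <;> · push_cast; ring

theorem hasDerivAt_gam {R y : ℝ} (h : 0 < R ^ 2 - y ^ 2) : HasDerivAt (gam R) (gam' R y) y := by
  have h1 : HasDerivAt (fun y : ℝ => R ^ 2 - y ^ 2) (-(2 * y)) y := by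
    simpa using ((hasDerivAt_pow 2 y).const_sub (R ^ 2))
  refine ((h1.sqrt h.ne').const_sub R).congr_deriv ?_
  have : 0 < √(R ^ 2 - y ^ 2) := Real.sqrt_pos.2 h
  unfold gam'; field_simp

theorem gam_nonneg {R y : ℝ} (hR : 0 < R) : 0 ≤ gam R y := by
  unfold gam
  have : √(R ^ 2 - y ^ 2) ≤ R := Real.sqrt_le_iff.2 ⟨hR.le, by nlinarith [sq_nonneg y]⟩
  linarith

/-- Inside the disk, lying inside the circle means lying to the right of the arc. -/
theorem qf_pos_iff {R r : ℝ} (hr : 0 < r) (hrR : r < R) {p : ℝ × ℝ} (hp : p ∈ Dk r) :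
    0 < qf R p ↔ gam R p.2 < p.1 := by
  have hp : p.1 ^ 2 + p.2 ^ 2 < r ^ 2 := hp
  have hx : p.1 < R := by nlinarith [sq_nonneg p.2]
  have hy : 0 ≤ R ^ 2 - p.2 ^ 2 := by nlinarith [sq_nonneg p.1]
  unfold gam qf
  rw [sub_lt_comm, Real.lt_sqrt (by linarith)]
  constructor <;> intro h <;> nlinarith

theorem qf_gam {R y : ℝ} (h : 0 ≤ R ^ 2 - y ^ 2) : qf R (gam R y, y) = 0 := by
  unfold qf gam
  have := Real.sq_sqrt h
  simp only
  nlinarith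

theorem HasPD.comp₂ {Z u v : ℝ × ℝ → ℝ} {a b c d e f : ℝ} {p : ℝ × ℝ}
    (hZ : HasPD Z a b (u p, v p)) (hu : HasPD u c d p) (hv : HasPD v e f p) :
    HasPD (fun q => Z (u q, v q)) (a * c + b * e) (a * d + b * f) p := by
  refine (HasFDerivAt.comp (f := fun q => (u q, v q)) p hZ (HasFDerivAt.prodMk hu hv)).congr_fderiv ?_
  ext <;> simp

/-- Divergence theorem on `Dp R r` for fields with compact support in the disk `Dk r`, so that the
only boundary term is the one on the arc. -/
theorem half_divergence {R r : ℝ} (hr : 0 < r) (hrR : r < R) {Z₁ Z₂ : ℝ × ℝ → ℝ}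
    (h₁ : ContDiff ℝ 1 Z₁) (h₂ : ContDiff ℝ 1 Z₂) {K : Set (ℝ × ℝ)} (hK : IsCompact K)
    (hKD : K ⊆ Dk r) (hz₁ : ∀ p ∉ K, Z₁ p = 0) (hz₂ : ∀ p ∉ K, Z₂ p = 0) :
    ∫ p in Dp R r, (pdx Z₁ p + pdy Z₂ p)
      = -∫ y in (-r)..r, (Z₁ (gam R y, y) - gam' R y * Z₂ (gam R y, y)) := by
  have hR : 0 < R := hr.trans hrR
  have hpos : ∀ y ∈ Icc (-r) r, 0 < R ^ 2 - y ^ 2 := by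
    intro y hy; nlinarith [hy.1, hy.2]
  have dz₁ : ∀ p, HasPD Z₁ (pdx Z₁ p) (pdy Z₁ p) p := fun p =>
    HasPD.of_differentiableAt (h₁.differentiable (by norm_num) p)
  have dz₂ : ∀ p, HasPD Z₂ (pdx Z₂ p) (pdy Z₂ p) p := fun p =>
    HasPD.of_differentiableAt (h₂.differentiable (by norm_num) p)
  have zero_pd : ∀ {Z : ℝ × ℝ → ℝ}, (∀ p ∉ K, Z p = 0) → ∀ p ∉ K, pdx Z p = 0 ∧ pdy Z p = 0 := by
    intro Z hZ p hp
    have : Z =ᶠ[nhds p] fun _ => 0 := by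
      filter_upwards [hK.isClosed.isOpen_compl.mem_nhds hp] with x hx using hZ x hx
    exact ⟨((HasPD.const 0).congr_nhds this).pdx_eq, ((HasPD.const 0).congr_nhds this).pdy_eq⟩
  set h : ℝ × ℝ → ℝ := fun p => pdx Z₁ p + pdy Z₂ p with hh
  have hz : ∀ p ∉ K, h p = 0 := fun p hp => by
    simp only [hh]; rw [(zero_pd hz₁ p hp).1, (zero_pd hz₂ p hp).2, add_zero]
  have hc : Continuous h :=
    ((h₁.continuous_fderiv (by norm_num)).clm_apply continuous_const).add
      ((h₂.continuous_fderiv (by norm_num)).clm_apply continuous_const)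
  have hi : Integrable h := hc.integrable_of_hasCompactSupport (HasCompactSupport.intro hK hz)
  have hK2 : ∀ {x y : ℝ}, r ≤ |y| → (x, y) ∉ K := by
    intro x y hy hxy
    have := hKD hxy
    have h3 : x ^ 2 + y ^ 2 < r ^ 2 := this
    nlinarith [sq_abs y, sq_nonneg x]
  have hK1 : ∀ {x y : ℝ}, r ≤ |x| → (x, y) ∉ K := by
    intro x y hy hxy
    have := hKD hxy
    have h3 : x ^ 2 + y ^ 2 < r ^ 2 := this
    nlinarith [sq_abs x, sq_nonneg y]
  -- straightened coordinates
  let F : ℝ × ℝ → ℝ := fun w => Z₂ (w.2 + gam R w.1, w.1)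
  let G : ℝ × ℝ → ℝ := fun w => Z₁ (w.2 + gam R w.1, w.1) - gam' R w.1 * Z₂ (w.2 + gam R w.1, w.1)
  have hFG : ∀ w : ℝ × ℝ, w.1 ∈ Icc (-r) r → DifferentiableAt ℝ F w ∧ DifferentiableAt ℝ G w ∧
      pdx F w + pdy G w = h (w.2 + gam R w.1, w.1) := by
    intro w hw
    have hγ := (HasPD.fst (p := w)).comp (hasDerivAt_gam (hpos w.1 hw))
    have hu : HasPD (fun w => w.2 + gam R w.1) _ _ w := (HasPD.snd (p := w)).add hγ
    have hγ' : HasDerivAt (gam' R) (deriv (gam' R) w.1) w.1 := by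
      refine DifferentiableAt.hasDerivAt ?_
      unfold gam'
      have := hpos w.1 hw
      refine DifferentiableAt.div (by fun_prop) ?_ (Real.sqrt_pos.2 this).ne'
      exact DifferentiableAt.sqrt (by fun_prop) this.ne'
    have hF : HasPD F _ _ w := (dz₂ _).comp₂ hu (HasPD.fst (p := w))
    have hG : HasPD G _ _ w := ((dz₁ _).comp₂ hu (HasPD.fst (p := w))).sub
      (((HasPD.fst (p := w)).comp hγ').mul hF)
    refine ⟨hF.differentiableAt, hG.differentiableAt, ?_⟩
    rw [hF.pdx_eq, hG.pdy_eq]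
    simp only [hh]
    ring
  have hγc : ContinuousOn (fun w : ℝ × ℝ => (w.2 + gam R w.1, w.1)) (Icc (-r) r ×ˢ univ) := by
    have : Continuous (gam R) := by unfold gam; fun_prop
    fun_prop
  have hdiv := integral2_divergence_prod_of_hasFDerivAt F G (fderiv ℝ F) (fderiv ℝ G)
    (-r) 0 r (3 * r)
  have huI : uIcc (-r) r = Icc (-r) r := uIcc_of_le (by linarith)
  rw [huI, min_eq_left (by linarith : -r ≤ r), max_eq_right (by linarith : -r ≤ r)] at hdiv
  specialize hdiv
    (fun w hw => (hFG w hw.1).1.continuousAt.continuousWithinAt)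
    (fun w hw => (hFG w hw.1).2.1.continuousAt.continuousWithinAt)
    (fun w hw => (hFG w (Ioo_subset_Icc_self hw.1)).1.hasFDerivAt)
    (fun w hw => (hFG w (Ioo_subset_Icc_self hw.1)).2.1.hasFDerivAt)
    (by
      have : IntegrableOn (fun w : ℝ × ℝ => h (w.2 + gam R w.1, w.1))
          (Icc (-r) r ×ˢ uIcc 0 (3 * r)) :=
        ((hc.comp_continuousOn hγc).mono (prod_mono le_rfl (subset_univ _))).integrableOn_compact
          (isCompact_Icc.prod isCompact_uIcc)
      refine this.congr_fun (fun w hw => ?_) (measurableSet_Icc.prod measurableSet_uIcc)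
      exact (hFG w hw.1).2.2.symm)
  -- three of the four boundary terms vanish
  have e1 : ∫ x in (-r)..r, G (x, 3 * r) = 0 := by
    rw [intervalIntegral.integral_congr (g := fun _ => 0), intervalIntegral.integral_zero]
    intro y hy
    have : (3 * r + gam R y, y) ∉ K := hK1 (by
      have := gam_nonneg (y := y) hR
      rw [abs_of_nonneg (by linarith)]; linarith)
    simp only [G]
    rw [hz₁ _ this, hz₂ _ this]; ring
  have e2 : ∀ t, F (r, t) = 0 := fun t => hz₂ _ (hK2 (by simp [abs_of_pos hr]))
  have e3 : ∀ t, F (-r, t) = 0 := fun t => hz₂ _ (hK2 (by simp [abs_of_pos hr]))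
  have e4 : ∀ y, G (y, 0) = Z₁ (gam R y, y) - gam' R y * Z₂ (gam R y, y) := by
    intro y; simp [G]
  simp only [e1, e2, e3, e4, intervalIntegral.integral_zero] at hdiv
  rw [zero_sub, add_zero, sub_zero] at hdiv
  rw [← hdiv, ← integral_indicator (isOpen_Dp R r).measurableSet,
    Measure.volume_eq_prod, integral_prod_symm _ ((integrable_indicator_iff
      (isOpen_Dp R r).measurableSet).2 (by rw [← Measure.volume_eq_prod]; exact hi.integrableOn)),
    intervalIntegral.integral_of_le (by linarith), ← integral_indicator measurableSet_Ioc]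
  refine integral_congr_ae (Eventually.of_forall fun y => ?_)
  simp only
  by_cases hy : y ∈ Ioc (-r) r
  · rw [indicator_of_mem hy]
    have hy' : y ∈ Icc (-r) r := Ioc_subset_Icc_self hy
    have e5 : ∫ t in (0 : ℝ)..(3 * r), (fderiv ℝ F (y, t) (1, 0) + fderiv ℝ G (y, t) (0, 1))
        = ∫ t in (0 : ℝ)..(3 * r), h (t + gam R y, y) := by
      refine intervalIntegral.integral_congr fun t _ => ?_
      exact (hFG (y, t) hy').2.2
    rw [e5, intervalIntegral.integral_comp_add_right (fun x => h (x, y)),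
      intervalIntegral.integral_of_le (by linarith), ← integral_indicator measurableSet_Ioc]
    refine integral_congr_ae (Eventually.of_forall fun x => ?_)
    simp only
    by_cases hx : (x, y) ∈ K
    · have hxD := hKD hx
      have hiff := qf_pos_iff hr hrR hxD
      have hx2 : x ≤ 3 * r + gam R y := by
        have := gam_nonneg (y := y) hR
        have h3 : x ^ 2 + y ^ 2 < r ^ 2 := hxD
        nlinarith [sq_nonneg y]
      by_cases hq : 0 < qf R (x, y)
      · rw [indicator_of_mem (show (x, y) ∈ Dp R r from ⟨hxD, hq⟩),
          indicator_of_mem (show x ∈ Ioc (0 + gam R y) (3 * r + gam R y) from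
            ⟨by rw [zero_add]; exact hiff.1 hq, hx2⟩)]
      · rw [indicator_of_notMem (fun h => hq h.2),
          indicator_of_notMem (fun h => hq (hiff.2 (by have := h.1; rwa [zero_add] at this)))]
    · exact (indicator_apply_eq_zero.2 fun _ => hz _ hx).trans
        (indicator_apply_eq_zero (f := fun x => h (x, y)) |>.2 fun _ => hz _ hx).symm
  · rw [indicator_of_notMem hy]
    have : ∀ x, (Dp R r).indicator h (x, y) = 0 := by
      intro x
      refine indicator_apply_eq_zero.2 fun _ => hz _ (hK2 ?_)
      by_contra hlt
      rw [not_le, abs_lt] at hlt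
      exact hy ⟨hlt.1, hlt.2.le⟩
    exact integral_eq_zero_of_ae (Eventually.of_forall this)

/-! ### Flux across the arc -/

theorem gX_abs_le (f : ℝ × ℝ → ℝ) (p : ℝ × ℝ) : |gX f p| ≤ 1 :=
  (sq_le_one_iff_abs_le_one _).1 (by nlinarith [gX_sq_add_gY_sq_le f p, sq_nonneg (gY f p)])

theorem gY_abs_le (f : ℝ × ℝ → ℝ) (p : ℝ × ℝ) : |gY f p| ≤ 1 :=
  (sq_le_one_iff_abs_le_one _).1 (by nlinarith [gX_sq_add_gY_sq_le f p, sq_nonneg (gX f p)])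

theorem gX_sub_abs_le (f : ℝ × ℝ → ℝ) {R r : ℝ} (hr : 0 < r) (hrR : r < R) {p : ℝ × ℝ}
    (hp : p ∈ Dk r) : |gX f p - (p.1 - R) / R| ≤ 3 := by
  have hp : p.1 ^ 2 + p.2 ^ 2 < r ^ 2 := hp
  have hR : 0 < R := hr.trans hrR
  have h1 : |p.1| < r := abs_lt_of_sq_lt_sq (by nlinarith [sq_nonneg p.2]) hr.le
  have h2 : |(p.1 - R) / R| ≤ 2 := by
    rw [abs_div, abs_of_pos hR, div_le_iff₀ hR, abs_le]
    rw [abs_lt] at h1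
    constructor <;> linarith [h1.1, h1.2]
  have := abs_sub (gX f p) ((p.1 - R) / R)
  linarith [gX_abs_le f p]

theorem gY_sub_abs_le (f : ℝ × ℝ → ℝ) {R r : ℝ} (hr : 0 < r) (hrR : r < R) {p : ℝ × ℝ}
    (hp : p ∈ Dk r) : |gY f p - p.2 / R| ≤ 3 := by
  have hp : p.1 ^ 2 + p.2 ^ 2 < r ^ 2 := hp
  have hR : 0 < R := hr.trans hrR
  have h1 : |p.2| < r := abs_lt_of_sq_lt_sq (by nlinarith [sq_nonneg p.1]) hr.le
  have h2 : |p.2 / R| ≤ 2 := by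
    rw [abs_div, abs_of_pos hR, div_le_iff₀ hR]
    linarith
  have := abs_sub (gY f p) (p.2 / R)
  linarith [gY_abs_le f p]

/-- `(X_f - Y) · ∇φ - φ / R` with `Y = (p - (R, 0)) / R`; it is the divergence of `φ (X_f - Y)`
when `f` solves the equation with `2H = 1 / R`. -/
def fluxInt (R : ℝ) (f φ : ℝ × ℝ → ℝ) (p : ℝ × ℝ) : ℝ :=
  (gX f p - (p.1 - R) / R) * pdx φ p + (gY f p - p.2 / R) * pdy φ p - φ p / R

theorem pd_eq_zero_of_compact {K : Set (ℝ × ℝ)} (hK : IsCompact K) {φ : ℝ × ℝ → ℝ}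
    (hz : ∀ p ∉ K, φ p = 0) : ∀ p ∉ K, pdx φ p = 0 ∧ pdy φ p = 0 := by
  intro p hp
  have : φ =ᶠ[nhds p] fun _ => 0 := by
    filter_upwards [hK.isClosed.isOpen_compl.mem_nhds hp] with x hx using hz x hx
  exact ⟨((HasPD.const 0).congr_nhds this).pdx_eq, ((HasPD.const 0).congr_nhds this).pdy_eq⟩

theorem continuous_pdx {φ : ℝ × ℝ → ℝ} (hφ : ContDiff ℝ 1 φ) : Continuous (pdx φ) :=
  (hφ.continuous_fderiv (by norm_num)).clm_apply continuous_const

theorem continuous_pdy {φ : ℝ × ℝ → ℝ} (hφ : ContDiff ℝ 1 φ) : Continuous (pdy φ) :=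
  (hφ.continuous_fderiv (by norm_num)).clm_apply continuous_const

/-- In the limit, a divergence line along the arc gives zero flux defect: the limit field agrees
weakly with the outward unit normal `Y` on the arc. -/
theorem flux_limit {R r : ℝ} (hr : 0 < r) (hrR : r < R) {w : ℕ → ℝ × ℝ → ℝ} {v : ℝ × ℝ → ℝ}
    (hw : ∀ n, ContDiffOn ℝ 2 (w n) (Dk r))
    (hdw : ∀ n, ∀ p ∈ Dk r, pdx (gX (w n)) p + pdy (gY (w n)) p = 1 / R)
    (hv : ContDiffOn ℝ 2 v (Dp R r))
    (hX : ∀ p ∈ Dp R r, Tendsto (fun n => gX (w n) p) atTop (nhds (gX v p)))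
    (hY : ∀ p ∈ Dp R r, Tendsto (fun n => gY (w n) p) atTop (nhds (gY v p)))
    (aX : ∀ p ∈ Dk r, qf R p = 0 → Tendsto (fun n => gX (w n) p) atTop (nhds ((p.1 - R) / R)))
    (aY : ∀ p ∈ Dk r, qf R p = 0 → Tendsto (fun n => gY (w n) p) atTop (nhds (p.2 / R)))
    {φ : ℝ × ℝ → ℝ} (hφ : ContDiff ℝ 1 φ) {K : Set (ℝ × ℝ)} (hK : IsCompact K)
    (hKD : K ⊆ Dk r) (hz : ∀ p ∉ K, φ p = 0) :
    IntegrableOn (fluxInt R v φ) (Dp R r) ∧ ∫ p in Dp R r, fluxInt R v φ p = 0 := by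
  have hR : 0 < R := hr.trans hrR
  have hpd := pd_eq_zero_of_compact hK hz
  have cpx := continuous_pdx hφ
  have cpy := continuous_pdy hφ
  have hDm : MeasurableSet (Dp R r) := (isOpen_Dp R r).measurableSet
  -- a common integrable majorant
  let bd : ℝ × ℝ → ℝ := fun p => 3 * |pdx φ p| + 3 * |pdy φ p| + |φ p| / R
  have bd_int : Integrable bd := by
    refine Continuous.integrable_of_hasCompactSupport (by fun_prop) (HasCompactSupport.intro hK ?_)
    intro p hp
    simp [bd, hz p hp, (hpd p hp).1, (hpd p hp).2]
  have bd_le : ∀ f, ∀ p ∈ Dp R r, ‖fluxInt R f φ p‖ ≤ bd p := by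
    intro f p hp
    have h1 := gX_sub_abs_le f hr hrR hp.1
    have h2 := gY_sub_abs_le f hr hrR hp.1
    rw [Real.norm_eq_abs]
    unfold fluxInt
    calc _ ≤ |(gX f p - (p.1 - R) / R) * pdx φ p + (gY f p - p.2 / R) * pdy φ p| + |φ p / R| :=
          abs_sub _ _
      _ ≤ |(gX f p - (p.1 - R) / R) * pdx φ p| + |(gY f p - p.2 / R) * pdy φ p| + |φ p / R| := by
          gcongr; exact abs_add_le _ _
      _ ≤ bd p := by
          rw [abs_mul, abs_mul, abs_div, abs_of_pos hR]
          simp only [bd]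
          gcongr
  have meas : ∀ f, ContDiffOn ℝ 2 f (Dp R r) →
      AEStronglyMeasurable (fluxInt R f φ) (volume.restrict (Dp R r)) := by
    intro f hf
    refine ContinuousOn.aestronglyMeasurable ?_ hDm
    have c1 := (contDiffOn_gX (isOpen_Dp R r) hf).continuousOn
    have c2 := (contDiffOn_gY (isOpen_Dp R r) hf).continuousOn
    have c3 := cpx.continuousOn (s := Dp R r)
    have c4 := cpy.continuousOn (s := Dp R r)
    have c5 := hφ.continuous.continuousOn (s := Dp R r)
    have c6 : Continuous (fun p : ℝ × ℝ => (p.1 - R) / R) := by fun_prop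
    have c7 : Continuous (fun p : ℝ × ℝ => p.2 / R) := by fun_prop
    exact (((c1.sub c6.continuousOn).mul c3).add ((c2.sub c7.continuousOn).mul c4)).sub
      (c5.div_const R)
  have hae : ∀ {P : ℝ × ℝ → Prop}, (∀ p ∈ Dp R r, P p) → ∀ᵐ p ∂(volume.restrict (Dp R r)), P p :=
    fun h => (ae_restrict_iff' hDm).2 (Eventually.of_forall h)
  refine ⟨bd_int.integrableOn.mono' (meas v hv) (hae (bd_le v)), ?_⟩
  have lim1 : Tendsto (fun n => ∫ p in Dp R r, fluxInt R (w n) φ p) atTop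
      (nhds (∫ p in Dp R r, fluxInt R v φ p)) := by
    refine tendsto_integral_of_dominated_convergence bd
      (fun n => meas _ ((hw n).mono (Dp_subset R r))) bd_int.integrableOn
      (fun n => hae (bd_le (w n))) (hae fun p hp => ?_)
    unfold fluxInt
    exact ((((hX p hp).sub_const _).mul_const _).add (((hY p hp).sub_const _).mul_const _)).sub_const _
  -- the boundary integrals
  let Z₁ : ℕ → ℝ × ℝ → ℝ := fun n => (Dk r).indicator (fun p => φ p * (gX (w n) p - (p.1 - R) / R))
  let Z₂ : ℕ → ℝ × ℝ → ℝ := fun n => (Dk r).indicator (fun p => φ p * (gY (w n) p - p.2 / R))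
  have cY1 : ContDiff ℝ 1 (fun p : ℝ × ℝ => (p.1 - R) / R) := by fun_prop
  have cY2 : ContDiff ℝ 1 (fun p : ℝ × ℝ => p.2 / R) := by fun_prop
  have cX := fun n => contDiffOn_gX (isOpen_Dk r) (hw n)
  have cY := fun n => contDiffOn_gY (isOpen_Dk r) (hw n)
  have s1 : ∀ n, ContDiff ℝ 1 (Z₁ n) := fun n =>
    (contDiff_indicator_of_compact (isOpen_Dk r) hK hKD
      (hφ.contDiffOn.mul ((cX n).sub cY1.contDiffOn)) (fun p _ h => by simp [hz p h])).1
  have s2 : ∀ n, ContDiff ℝ 1 (Z₂ n) := fun n =>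
    (contDiff_indicator_of_compact (isOpen_Dk r) hK hKD
      (hφ.contDiffOn.mul ((cY n).sub cY2.contDiffOn)) (fun p _ h => by simp [hz p h])).1
  have z1 : ∀ n, ∀ p ∉ K, Z₁ n p = 0 := fun n p hp =>
    indicator_apply_eq_zero.2 fun _ => by simp [hz p hp]
  have z2 : ∀ n, ∀ p ∉ K, Z₂ n p = 0 := fun n p hp =>
    indicator_apply_eq_zero.2 fun _ => by simp [hz p hp]
  have key : ∀ n, ∫ p in Dp R r, fluxInt R (w n) φ p
      = -∫ y in (-r)..r, (Z₁ n (gam R y, y) - gam' R y * Z₂ n (gam R y, y)) := by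
    intro n
    rw [← half_divergence hr hrR (s1 n) (s2 n) hK hKD (z1 n) (z2 n)]
    refine setIntegral_congr_fun hDm fun p hp => ?_
    have hpk := hp.1
    have hev : ∀ {F : ℝ × ℝ → ℝ}, (Dk r).indicator F =ᶠ[nhds p] F := by
      intro F
      filter_upwards [(isOpen_Dk r).mem_nhds hpk] with x hx using indicator_of_mem hx F
    have dφ := HasPD.of_differentiableAt (hφ.differentiable (by norm_num) p)
    have d1 := dφ.mul (((cX n).hasPD (isOpen_Dk r) hpk).sub
      ((HasPD.fst.sub (HasPD.const R)).div (HasPD.const (p := p) R) hR.ne'))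
    have d2 := dφ.mul (((cY n).hasPD (isOpen_Dk r) hpk).sub
      ((HasPD.snd (p := p)).div (HasPD.const R) hR.ne'))
    have e1 : pdx (Z₁ n) p = _ := (d1.congr_nhds hev).pdx_eq
    have e2 : pdy (Z₂ n) p = _ := (d2.congr_nhds hev).pdy_eq
    rw [e1, e2]
    have := hdw n p hpk
    have h3 : pdy (gY (w n)) p = 1 / R - pdx (gX (w n)) p := by linarith
    rw [h3]
    unfold fluxInt
    field_simp
    ring
  have hpos : ∀ y ∈ Icc (-r) r, 0 < R ^ 2 - y ^ 2 := by
    intro y hy; nlinarith [hy.1, hy.2]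
  have huI : uIcc (-r) r = Icc (-r) r := uIcc_of_le (by linarith)
  have cγ : Continuous (gam R) := by unfold gam; fun_prop
  have cγ' : ContinuousOn (gam' R) (Icc (-r) r) := by
    unfold gam'
    exact continuousOn_id.div (by fun_prop) fun y hy => (Real.sqrt_pos.2 (hpos y hy)).ne'
  have lim2 : Tendsto (fun n => ∫ y in (-r)..r,
      (Z₁ n (gam R y, y) - gam' R y * Z₂ n (gam R y, y))) atTop
      (nhds (∫ _y in (-r)..r, (0 : ℝ))) := by
    refine intervalIntegral.tendsto_integral_filter_of_dominated_convergence
      (fun y => 3 * |φ (gam R y, y)| + |gam' R y| * (3 * |φ (gam R y, y)|)) ?_ ?_ ?_ ?_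
    · refine Eventually.of_forall fun n => ?_
      have c1 := (s1 n).continuous
      have c2 := (s2 n).continuous
      refine (ContinuousOn.aestronglyMeasurable (s := Icc (-r) r) ?_ measurableSet_Icc).mono_measure
        (Measure.restrict_mono (by rw [← huI]; exact uIoc_subset_uIcc) le_rfl)
      exact (by fun_prop : Continuous fun y => Z₁ n (gam R y, y)).continuousOn.sub
        (cγ'.mul (by fun_prop : Continuous fun y => Z₂ n (gam R y, y)).continuousOn)
    · refine Eventually.of_forall fun n => Eventually.of_forall fun y _ => ?_
      have b1 : |Z₁ n (gam R y, y)| ≤ 3 * |φ (gam R y, y)| := by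
        by_cases hp : (gam R y, y) ∈ Dk r
        · have : Z₁ n (gam R y, y) = _ := indicator_of_mem hp _
          rw [this, abs_mul, mul_comm]
          exact mul_le_mul_of_nonneg_right (gX_sub_abs_le (w n) hr hrR hp) (abs_nonneg _)
        · have : Z₁ n (gam R y, y) = 0 := indicator_of_notMem hp _
          rw [this, abs_zero]; positivity
      have b2 : |Z₂ n (gam R y, y)| ≤ 3 * |φ (gam R y, y)| := by
        by_cases hp : (gam R y, y) ∈ Dk r
        · have : Z₂ n (gam R y, y) = _ := indicator_of_mem hp _
          rw [this, abs_mul, mul_comm]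
          exact mul_le_mul_of_nonneg_right (gY_sub_abs_le (w n) hr hrR hp) (abs_nonneg _)
        · have : Z₂ n (gam R y, y) = 0 := indicator_of_notMem hp _
          rw [this, abs_zero]; positivity
      rw [Real.norm_eq_abs]
      refine (abs_sub _ _).trans (add_le_add b1 ?_)
      rw [abs_mul]
      gcongr
    · refine ContinuousOn.intervalIntegrable ?_
      rw [huI]
      have : Continuous fun y => 3 * |φ (gam R y, y)| := by
        have := hφ.continuous
        fun_prop
      exact this.continuousOn.add (cγ'.abs.mul this.continuousOn)
    · refine Eventually.of_forall fun y hy => ?_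
      have hy' : y ∈ Icc (-r) r := by rw [← huI]; exact uIoc_subset_uIcc hy
      have hq : qf R (gam R y, y) = 0 := qf_gam (hpos y hy').le
      by_cases hp : (gam R y, y) ∈ Dk r
      · have e1 : ∀ n, Z₁ n (gam R y, y) = _ := fun n => indicator_of_mem hp _
        have e2 : ∀ n, Z₂ n (gam R y, y) = _ := fun n => indicator_of_mem hp _
        simp only [e1, e2]
        have l1 := ((aX _ hp hq).sub_const ((gam R y - R) / R)).const_mul (φ (gam R y, y))
        have l2 := (((aY _ hp hq).sub_const (y / R)).const_mul (φ (gam R y, y))).const_mul (gam' R y)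
        simpa using l1.sub l2
      · have e1 : ∀ n, Z₁ n (gam R y, y) = 0 := fun n => indicator_of_notMem hp _
        have e2 : ∀ n, Z₂ n (gam R y, y) = 0 := fun n => indicator_of_notMem hp _
        simp [e1, e2]
  rw [intervalIntegral.integral_zero] at lim2
  simp only [key] at lim1
  have lim3 := lim2.neg
  rw [neg_zero] at lim3
  exact tendsto_nhds_unique lim1 lim3

/-! ### The boundary condition used in the comparison -/

/-- Weak form of "`f` has boundary values `+∞` on the arc": the boundary layer integrals of the
defect `1 - X_f · Y`, taken over the points where `f < M`, tend to zero.  Here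
`Y = (p - (R, 0)) / R` is the outward unit normal on the arc. -/
def WeakInfty (R r : ℝ) (f : ℝ × ℝ → ℝ) : Prop :=
  ∀ r', 0 < r' → r' < r → ∀ M : ℝ, ∃ T : ℕ → ℝ × ℝ → ℝ, (∀ k p, 0 ≤ T k p) ∧
    (∀ k, Integrable (T k)) ∧ Tendsto (fun k => ∫ p, T k p) atTop (nhds 0) ∧
    ∀ᶠ k : ℕ in atTop, ∀ p ∈ Dp R r, p.1 ^ 2 + p.2 ^ 2 ≤ r' ^ 2 → f p < M →
      cut' (1 / ((k : ℝ) + 1)) (qf R p) *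
        (2 * R * (1 - (gX f p * ((p.1 - R) / R) + gY f p * (p.2 / R)))) ≤ T k p

theorem isCompact_disk (ρ : ℝ) : IsCompact {p : ℝ × ℝ | p.1 ^ 2 + p.2 ^ 2 ≤ ρ ^ 2} := by
  refine Metric.isCompact_of_isClosed_isBounded (isClosed_le (by fun_prop) (by fun_prop)) ?_
  refine (isBounded_Dk (|ρ| + 1)).subset fun p hp => ?_
  have hp : p.1 ^ 2 + p.2 ^ 2 ≤ ρ ^ 2 := hp
  show p.1 ^ 2 + p.2 ^ 2 < (|ρ| + 1) ^ 2
  nlinarith [sq_abs ρ, abs_nonneg ρ]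

theorem normal_sq {R : ℝ} (hR : 0 < R) (p : ℝ × ℝ) :
    ((p.1 - R) / R) ^ 2 + (p.2 / R) ^ 2 = 1 - qf R p / R ^ 2 := by
  unfold qf; field_simp; ring

theorem dot_normal_le {R a b : ℝ} (hR : 0 < R) {p : ℝ × ℝ} (hq : 0 ≤ qf R p)
    (h : a ^ 2 + b ^ 2 ≤ 1) :
    a * ((p.1 - R) / R) + b * (p.2 / R) ≤ 1 ∧ -1 ≤ a * ((p.1 - R) / R) + b * (p.2 / R) := by
  have h1 := normal_sq hR p
  have h2 : 0 ≤ qf R p / R ^ 2 := by positivity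
  generalize (p.1 - R) / R = c at *
  generalize p.2 / R = d at *
  constructor
  · nlinarith [sq_nonneg (a - c), sq_nonneg (b - d)]
  · nlinarith [sq_nonneg (a + c), sq_nonneg (b + d)]

/-- Boundary values `+∞` imply their weak form, because for small layers the set where `f < M`
does not meet the layer. -/
theorem weakInfty_of_tendsto {R r : ℝ} {f : ℝ × ℝ → ℝ}
    (hf : ∀ P ∈ Dk r, qf R P = 0 → ∀ M : ℝ, ∀ᶠ Q in nhds P, Q ∈ Dp R r → M < f Q) :
    WeakInfty R r f := by
  intro r' hr' hr'r M
  refine ⟨fun _ _ => 0, fun _ _ => le_rfl, fun _ => integrable_zero _ _ _, by simp, ?_⟩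
  have hex : ∃ e0 > 0, ∀ p ∈ Dp R r, p.1 ^ 2 + p.2 ^ 2 ≤ r' ^ 2 → f p < M → e0 ≤ qf R p := by
    by_contra! hcon
    choose x hx using fun k : ℕ => hcon (1 / ((k : ℝ) + 1)) (by positivity)
    obtain ⟨P, hP, ψ, hψ, hlim⟩ := (isCompact_disk r').tendsto_subseq (fun k => (hx k).2.1)
    have hP' : P.1 ^ 2 + P.2 ^ 2 ≤ r' ^ 2 := hP
    have hPD : P ∈ Dk r := show P.1 ^ 2 + P.2 ^ 2 < r ^ 2 by nlinarith
    have hq1 : Tendsto (fun k => qf R (x (ψ k))) atTop (nhds (qf R P)) :=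
      ((continuous_qf R).tendsto P).comp hlim
    have hq2 : Tendsto (fun k => qf R (x (ψ k))) atTop (nhds 0) := by
      refine squeeze_zero (fun k => (hx (ψ k)).1.2.le) (fun k => (hx (ψ k)).2.2.2.le) ?_
      exact (tendsto_one_div_add_atTop_nhds_zero_nat (𝕜 := ℝ)).comp hψ.tendsto_atTop
    have hev := hlim.eventually (hf P hPD (tendsto_nhds_unique hq1 hq2) M)
    obtain ⟨k, hk⟩ := hev.exists
    have h1 := hk (hx (ψ k)).1
    have h2 := (hx (ψ k)).2.2.1
    simp only [Function.comp] at h1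
    linarith
  obtain ⟨e0, he0, h⟩ := hex
  have hsmall : ∀ᶠ k : ℕ in atTop, 1 / ((k : ℝ) + 1) < e0 / 2 :=
    (tendsto_one_div_add_atTop_nhds_zero_nat (𝕜 := ℝ)).eventually (gt_mem_nhds (by positivity))
  filter_upwards [hsmall] with k hk p hp hpr hpM
  rw [cut'_eq_zero (by positivity) (by linarith [h p hp hpr hpM]), zero_mul]

theorem exists_bump {r' r : ℝ} (h0 : 0 < r') (h : r' < r) :
    ∃ (l : ℝ × ℝ → ℝ) (K : Set (ℝ × ℝ)), ContDiff ℝ 1 l ∧ IsCompact K ∧ K ⊆ Dk r ∧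
      (∀ p ∉ K, l p = 0) ∧ (∀ p, 0 ≤ l p) ∧ (∀ p, l p ≤ 1) ∧
      ∀ p : ℝ × ℝ, p.1 ^ 2 + p.2 ^ 2 ≤ r' ^ 2 → l p = 1 := by
  set ρ := (r' + r) / 2 with hρ
  have h1 : r' < ρ := by linarith
  have h2 : ρ < r := by linarith
  have h3 : 0 < ρ ^ 2 - r' ^ 2 := by nlinarith
  refine ⟨fun p => 1 - Real.smoothTransition ((p.1 ^ 2 + p.2 ^ 2 - r' ^ 2) / (ρ ^ 2 - r' ^ 2)),
    {p | p.1 ^ 2 + p.2 ^ 2 ≤ ρ ^ 2}, ?_, isCompact_disk ρ, ?_, ?_, ?_, ?_, ?_⟩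
  · exact contDiff_const.sub ((Real.smoothTransition.contDiff (n := 1)).comp (by fun_prop))
  · intro p hp
    have hp : p.1 ^ 2 + p.2 ^ 2 ≤ ρ ^ 2 := hp
    show p.1 ^ 2 + p.2 ^ 2 < r ^ 2
    nlinarith
  · intro p hp
    have hp : ρ ^ 2 < p.1 ^ 2 + p.2 ^ 2 := not_le.1 hp
    simp only
    rw [Real.smoothTransition.one_of_one_le (by rw [le_div_iff₀ h3]; linarith), sub_self]
  · intro p; linarith [Real.smoothTransition.le_one ((p.1 ^ 2 + p.2 ^ 2 - r' ^ 2) / (ρ ^ 2 - r' ^ 2))]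
  · intro p; linarith [Real.smoothTransition.nonneg ((p.1 ^ 2 + p.2 ^ 2 - r' ^ 2) / (ρ ^ 2 - r' ^ 2))]
  · intro p hp
    simp only
    rw [Real.smoothTransition.zero_of_nonpos
      (div_nonpos_of_nonpos_of_nonneg (by linarith) h3.le), sub_zero]

/-- Vanishing flux defect implies the weak boundary condition; the test functions are
`λ (1 - cut e (qf R))` with `λ` a bump function. -/
theorem weakInfty_of_flux {R r : ℝ} (hr : 0 < r) (hrR : r < R) {v : ℝ × ℝ → ℝ}
    (hv : ContDiffOn ℝ 2 v (Dp R r))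
    (hflux : ∀ φ : ℝ × ℝ → ℝ, ContDiff ℝ 1 φ → ∀ K : Set (ℝ × ℝ), IsCompact K → K ⊆ Dk r →
      (∀ p ∉ K, φ p = 0) →
      IntegrableOn (fluxInt R v φ) (Dp R r) ∧ ∫ p in Dp R r, fluxInt R v φ p = 0) :
    WeakInfty R r v := by
  intro r' hr' hr'r M
  have hR : 0 < R := hr.trans hrR
  obtain ⟨l, K, cl, hK, hKD, lz, l0, l1, lone⟩ := exists_bump hr' hr'r
  obtain ⟨B, hB0, hB⟩ := exists_deriv_smoothTransition_le
  have hDm : MeasurableSet (Dp R r) := (isOpen_Dp R r).measurableSet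
  have hbd : Bornology.IsBounded (Dp R r) := (isBounded_Dk r).subset (Dp_subset R r)
  have hpd := pd_eq_zero_of_compact hK lz
  obtain ⟨L1, hL1⟩ := (continuous_pdx cl).bounded_above_of_compact_support
    (HasCompactSupport.intro hK fun p hp => (hpd p hp).1)
  obtain ⟨L2, hL2⟩ := (continuous_pdy cl).bounded_above_of_compact_support
    (HasCompactSupport.intro hK fun p hp => (hpd p hp).2)
  have hL10 : 0 ≤ L1 := (norm_nonneg _).trans (hL1 0)
  have hL20 : 0 ≤ L2 := (norm_nonneg _).trans (hL2 0)
  let S : ℕ → ℝ × ℝ → ℝ := fun k p => l p * (cut' (1 / ((k : ℝ) + 1)) (qf R p) *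
    (2 * R * (1 - (gX v p * ((p.1 - R) / R) + gY v p * (p.2 / R)))))
  have S0 : ∀ k, ∀ p ∈ Dp R r, 0 ≤ S k p := by
    intro k p hp
    have h1 := (dot_normal_le hR hp.2.le (gX_sq_add_gY_sq_le v p)).1
    exact mul_nonneg (l0 p) (mul_nonneg (cut'_nonneg (by positivity) _)
      (mul_nonneg (by positivity) (by linarith)))
  have Sc : ∀ k, ContinuousOn (S k) (Dp R r) := by
    intro k
    have c1 := (contDiffOn_gX (isOpen_Dp R r) hv).continuousOn
    have c2 := (contDiffOn_gY (isOpen_Dp R r) hv).continuousOn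
    have c6 : Continuous (fun p : ℝ × ℝ => (p.1 - R) / R) := by fun_prop
    have c7 : Continuous (fun p : ℝ × ℝ => p.2 / R) := by fun_prop
    have c8 : Continuous fun p : ℝ × ℝ => cut' (1 / ((k : ℝ) + 1)) (qf R p) :=
      (continuous_cut' _).comp (continuous_qf R)
    exact cl.continuous.continuousOn.mul (c8.continuousOn.mul (continuousOn_const.mul
      (continuousOn_const.sub ((c1.mul c6.continuousOn).add (c2.mul c7.continuousOn)))))
  have Si : ∀ k, IntegrableOn (S k) (Dp R r) := by
    intro k
    have he : (0 : ℝ) < 1 / ((k : ℝ) + 1) := by positivity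
    refine IntegrableOn.of_bound hbd.measure_lt_top ((Sc k).aestronglyMeasurable hDm)
      (B / (1 / ((k : ℝ) + 1)) * (2 * R * 2)) ?_
    refine (ae_restrict_iff' hDm).2 (Eventually.of_forall fun p hp => ?_)
    have h1 := dot_normal_le hR hp.2.le (gX_sq_add_gY_sq_le v p)
    rw [Real.norm_eq_abs, abs_of_nonneg (S0 k p hp)]
    have h2 : 0 ≤ cut' (1 / ((k : ℝ) + 1)) (qf R p) := cut'_nonneg he _
    have h3 : cut' (1 / ((k : ℝ) + 1)) (qf R p) ≤ B / (1 / ((k : ℝ) + 1)) :=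
      div_le_div_of_nonneg_right (hB _) he.le
    have h4 : 2 * R * (1 - (gX v p * ((p.1 - R) / R) + gY v p * (p.2 / R))) ≤ 2 * R * 2 :=
      mul_le_mul_of_nonneg_left (by linarith [h1.2]) (by positivity)
    have h5 : 0 ≤ 2 * R * (1 - (gX v p * ((p.1 - R) / R) + gY v p * (p.2 / R))) :=
      mul_nonneg (by positivity) (by linarith [h1.1])
    have h6 := mul_le_mul h3 h4 h5 (by positivity)
    refine le_trans ?_ h6
    exact mul_le_of_le_one_left (mul_nonneg h2 h5) (l1 p)
  refine ⟨fun k => (Dp R r).indicator (S k), fun k p => indicator_nonneg (S0 k) p,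
    fun k => (integrable_indicator_iff hDm).2 (Si k), ?_, ?_⟩
  · obtain ⟨hLm, hLt⟩ := tendsto_layer (isOpen_Dp R r) hbd (continuous_qf R).continuousOn
      (fun p hp => hp.2)
    set A := 3 * L1 + 3 * L2 + 4 * B / R with hA
    refine squeeze_zero (g := fun k : ℕ => A * volume.real
        (Dp R r ∩ {p | qf R p < 2 * (1 / ((k : ℝ) + 1))}))
      (fun k => integral_nonneg fun p => indicator_nonneg (S0 k) p) (fun k => ?_)
      (by simpa using hLt.const_mul A)
    have he : (0 : ℝ) < 1 / ((k : ℝ) + 1) := by positivity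
    set e := 1 / ((k : ℝ) + 1) with hedef
    have cφ : ContDiff ℝ 1 (fun p => l p * (1 - cut e (qf R p))) :=
      cl.mul (contDiff_const.sub ((contDiff_cut e).comp (contDiff_qf R)))
    obtain ⟨Ei, E0⟩ := hflux _ cφ K hK hKD (fun p hp => by rw [lz p hp, zero_mul])
    have i2 : IntegrableOn ((Dp R r ∩ {p | qf R p < 2 * e}).indicator (fun _ => A)) (Dp R r) :=
      ((integrable_indicator_iff (hLm k)).2 (integrableOn_const
        (hbd.subset inter_subset_left).measure_lt_top.ne)).integrableOn
    rw [integral_indicator hDm]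
    have hle := setIntegral_mono_on (Si k) (Ei.neg.add i2) hDm (fun p hp => ?_)
    · rw [integral_add' Ei.neg i2, integral_neg', E0, setIntegral_indicator (hLm k),
        setIntegral_const, ← inter_assoc, inter_self] at hle
      rw [smul_eq_mul] at hle
      linarith
    · -- pointwise, `S` is bounded by minus the flux integrand plus a bounded layer term
      have dl := HasPD.of_differentiableAt (cl.differentiable (by norm_num) p)
      have dφ := dl.mul ((HasPD.const (p := p) 1).sub
        ((hasPD_qf R p).comp (hasDerivAt_cut e (qf R p))))
      have hN := normal_sq hR p
      have hid : S k p = -fluxInt R v (fun p => l p * (1 - cut e (qf R p))) p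
          + ((1 - cut e (qf R p)) * ((gX v p - (p.1 - R) / R) * pdx l p
            + (gY v p - p.2 / R) * pdy l p - l p / R)
            + 2 / R * (l p * (cut' e (qf R p) * qf R p))) := by
        simp only [S, fluxInt]
        rw [dφ.pdx_eq, dφ.pdy_eq]
        have hq : qf R p = R ^ 2 * (1 - (((p.1 - R) / R) ^ 2 + (p.2 / R) ^ 2)) := by
          rw [hN]; field_simp; ring
        have hx : p.1 - R = R * ((p.1 - R) / R) := by field_simp
        have hy : p.2 = R * (p.2 / R) := by field_simp
        generalize hc : cut' e (qf R p) = c'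
        generalize cut e (qf R p) = c at *
        rw [hq]
        generalize (p.1 - R) / R = Y₁ at *
        generalize p.2 / R = Y₂ at *
        rw [hx, hy]
        field_simp
        ring
      rw [hid]
      refine add_le_add le_rfl ?_
      have hq0 : 0 < qf R p := hp.2
      have hcut := cut'_mul_le hB hB0 he hq0.le
      have hc0 : 0 ≤ cut' e (qf R p) * qf R p := mul_nonneg (cut'_nonneg he _) hq0.le
      by_cases hlt : qf R p < 2 * e
      · rw [indicator_of_mem (show p ∈ Dp R r ∩ {p | qf R p < 2 * e} from ⟨hp, hlt⟩)]
        rw [if_pos hlt] at hcut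
        have hx1 := gX_sub_abs_le v hr hrR hp.1
        have hy1 := gY_sub_abs_le v hr hrR hp.1
        have a1 : (gX v p - (p.1 - R) / R) * pdx l p ≤ 3 * L1 := by
          refine (le_abs_self _).trans ?_
          rw [abs_mul]; exact mul_le_mul hx1 (hL1 p) (abs_nonneg _) (by norm_num)
        have a2 : (gY v p - p.2 / R) * pdy l p ≤ 3 * L2 := by
          refine (le_abs_self _).trans ?_
          rw [abs_mul]; exact mul_le_mul hy1 (hL2 p) (abs_nonneg _) (by norm_num)
        have a3 : 0 ≤ l p / R := div_nonneg (l0 p) hR.le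
        have a4 : (1 - cut e (qf R p)) * ((gX v p - (p.1 - R) / R) * pdx l p
            + (gY v p - p.2 / R) * pdy l p - l p / R) ≤ 1 * (3 * L1 + 3 * L2) := by
          refine (mul_le_mul_of_nonneg_left (by linarith : _ ≤ 3 * L1 + 3 * L2)
            (by linarith [cut_le_one e (qf R p)])).trans ?_
          exact mul_le_mul_of_nonneg_right (by linarith [cut_nonneg e (qf R p)]) (by positivity)
        have a5 : l p * (cut' e (qf R p) * qf R p) ≤ 2 * B :=
          (mul_le_of_le_one_left hc0 (l1 p)).trans hcut
        have a6 : 2 / R * (l p * (cut' e (qf R p) * qf R p)) ≤ 2 / R * (2 * B) :=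
          mul_le_mul_of_nonneg_left a5 (by positivity)
        have a7 : 2 / R * (2 * B) = 4 * B / R := by ring
        rw [hA]; linarith
      · rw [indicator_of_notMem (fun h => hlt h.2), cut_eq_one he (not_lt.1 hlt),
          cut'_eq_zero he (not_lt.1 hlt)]
        simp
  · refine Eventually.of_forall fun k p hp hpr _ => ?_
    simp only [indicator_of_mem hp, S]
    rw [lone p hpr, one_mul]

/-! ### Comparison near the arc -/

/-- Comparison with a strict subsolution `b` that is bounded above, for a solution `f` with weak
boundary values `+∞` on the arc. -/
theorem comparison_arc {R r r' C M : ℝ} (hr' : 0 < r') (hr'r : r' < r) (hrR : r < R)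
    {D : Set (ℝ × ℝ)} (hD : IsOpen D) (hDp : D ⊆ Dp R r)
    (hDr : ∀ p ∈ D, p.1 ^ 2 + p.2 ^ 2 ≤ r' ^ 2)
    {f b g : ℝ × ℝ → ℝ} (hf : ContDiffOn ℝ 2 f (Dp R r))
    (hdf : ∀ p ∈ Dp R r, pdx (gX f) p + pdy (gY f) p = 1 / R) (hinf : WeakInfty R r f)
    (hb : ContDiffOn ℝ 2 b D) (hdb : ∀ p ∈ D, 1 / R < pdx (gX b) p + pdy (gY b) p)
    (hbM : ∀ p ∈ D, b p ≤ M)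
    (hg : ContDiffOn ℝ 1 g D) (gpos : ∀ p ∈ D, 0 < g p) (hC : 0 ≤ C)
    (hgC : ∀ p ∈ D, (gX f p - gX b p) * pdx g p + (gY f p - gY b p) * pdy g p ≤ C * g p)
    (hK : ∀ e > 0, ∃ K ⊆ D, IsCompact K ∧
      ∀ p ∈ D, f p < b p → e ≤ g p → e ≤ qf R p → p ∈ K) :
    ∀ p ∈ D, b p ≤ f p := by
  have hR : 0 < R := hr'.trans (hr'r.trans hrR)
  obtain ⟨T, T0, Ti, Tl, hT⟩ := hinf r' hr' hr'r M
  refine comparison hD ((isBounded_Dk r).subset (hDp.trans (Dp_subset R r))) (hf.mono hDp)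
    (fun p hp => hdf p (hDp hp)) hb hdb hg gpos hC hgC (contDiff_qf R).contDiffOn
    (fun p hp => (hDp hp).2) hK T0 Ti Tl ?_
  filter_upwards [hT] with k hk p hp hlt
  refine le_trans (mul_le_mul_of_nonneg_left ?_ (cut'_nonneg (by positivity) _))
    (hk p (hDp hp) (hDr p hp) (hlt.trans_le (hbM p hp)))
  rw [(hasPD_qf R p).pdx_eq, (hasPD_qf R p).pdy_eq]
  have h1 := (dot_normal_le hR (hDp hp).2.le (gX_sq_add_gY_sq_le b p)).1
  have hx : p.1 - R = R * ((p.1 - R) / R) := by field_simp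
  have hy : p.2 = R * (p.2 / R) := by field_simp
  generalize (p.1 - R) / R = Y₁ at *
  generalize p.2 / R = Y₂ at *
  rw [hx, hy]
  nlinarith

/-- Squared distance to `P`. -/
def dsq (P Q : ℝ × ℝ) : ℝ := (Q.1 - P.1) ^ 2 + (Q.2 - P.2) ^ 2

/-- Signed distance from `Q` to the tangent line at `P` of the circle of radius `R` about `(R, 0)`,
positive on the side of the center. -/
def tdist (R : ℝ) (P Q : ℝ × ℝ) : ℝ :=
  (R - P.1) / R * (Q.1 - P.1) + -P.2 / R * (Q.2 - P.2)

theorem unit_normal {R : ℝ} (hR : 0 < R) {P : ℝ × ℝ} (hP : qf R P = 0) :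
    ((R - P.1) / R) ^ 2 + (-P.2 / R) ^ 2 = 1 := by
  have := normal_sq hR P
  rw [hP] at this
  have e1 : ((R - P.1) / R) ^ 2 = ((P.1 - R) / R) ^ 2 := by ring
  have e2 : (-P.2 / R) ^ 2 = (P.2 / R) ^ 2 := by ring
  rw [e1, e2, this]; simp

theorem qf_eq {R : ℝ} (hR : 0 < R) {P : ℝ × ℝ} (hP : qf R P = 0) (Q : ℝ × ℝ) :
    qf R Q = 2 * R * tdist R P Q - dsq P Q := by
  unfold qf at hP
  unfold qf tdist dsq
  field_simp
  linear_combination hP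

theorem tdist_sq_le {R : ℝ} (hR : 0 < R) {P : ℝ × ℝ} (hP : qf R P = 0) (Q : ℝ × ℝ) :
    tdist R P Q ^ 2 ≤ dsq P Q := by
  have h := unit_normal hR hP
  unfold tdist dsq
  generalize (R - P.1) / R = a at *
  generalize -P.2 / R = b at *
  have : (Q.1 - P.1) ^ 2 + (Q.2 - P.2) ^ 2
      = (a ^ 2 + b ^ 2) * ((Q.1 - P.1) ^ 2 + (Q.2 - P.2) ^ 2) := by rw [h, one_mul]
  rw [this]
  nlinarith [sq_nonneg (a * (Q.2 - P.2) - b * (Q.1 - P.1))]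

theorem hasPD_tdist (R : ℝ) (P Q : ℝ × ℝ) :
    HasPD (tdist R P) ((R - P.1) / R) (-P.2 / R) Q := by
  have h := ((HasPD.const (p := Q) ((R - P.1) / R)).mul (HasPD.fst.sub (HasPD.const P.1))).add
    ((HasPD.const (p := Q) (-P.2 / R)).mul (HasPD.snd.sub (HasPD.const P.2)))
  exact h.congr (by ring) (by ring)

theorem hasPD_dsq (P Q : ℝ × ℝ) :
    HasPD (dsq P) (2 * (Q.1 - P.1)) (2 * (Q.2 - P.2)) Q := by
  have h := ((HasPD.fst.sub (HasPD.const (p := Q) P.1)).comp (hasDerivAt_pow 2 (Q.1 - P.1))).add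
    ((HasPD.snd.sub (HasPD.const (p := Q) P.2)).comp (hasDerivAt_pow 2 (Q.2 - P.2)))
  refine h.congr ?_ ?_ <;> · push_cast; ring

theorem contDiff_tdist (R : ℝ) (P : ℝ × ℝ) : ContDiff ℝ 2 (tdist R P) := by
  unfold tdist; fun_prop

theorem contDiff_dsq (P : ℝ × ℝ) : ContDiff ℝ 2 (dsq P) := by unfold dsq; fun_prop

/-- The function whose square root is the first barrier. -/
def Gf (R l : ℝ) (P Q : ℝ × ℝ) : ℝ := 12 * l ^ 2 + 3 * tdist R P Q ^ 2 - dsq P Q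

theorem contDiff_Gf (R l : ℝ) (P : ℝ × ℝ) : ContDiff ℝ 2 (Gf R l P) := by
  have := contDiff_tdist R P
  have := contDiff_dsq P
  unfold Gf; fun_prop

theorem hasPD_Gf (R l : ℝ) (P Q : ℝ × ℝ) :
    HasPD (Gf R l P) (6 * tdist R P Q * ((R - P.1) / R) - 2 * (Q.1 - P.1))
      (6 * tdist R P Q * (-P.2 / R) - 2 * (Q.2 - P.2)) Q := by
  have h := ((HasPD.const (p := Q) (12 * l ^ 2)).add ((HasPD.const (p := Q) 3).mul
    ((hasPD_tdist R P Q).comp (hasDerivAt_pow 2 (tdist R P Q))))).sub (hasPD_dsq P Q)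
  refine h.congr ?_ ?_ <;> · push_cast; ring

/-- `|∇G|² + 4 G` depends on the distance to the tangent line only. -/
theorem grad_Gf_sq {R l : ℝ} (hR : 0 < R) {P : ℝ × ℝ} (hP : qf R P = 0) (Q : ℝ × ℝ) :
    (6 * tdist R P Q * ((R - P.1) / R) - 2 * (Q.1 - P.1)) ^ 2
      + (6 * tdist R P Q * (-P.2 / R) - 2 * (Q.2 - P.2)) ^ 2
      = 48 * l ^ 2 + 24 * tdist R P Q ^ 2 - 4 * Gf R l P Q := by
  have h := unit_normal hR hP
  have ht : tdist R P Q = (R - P.1) / R * (Q.1 - P.1) + -P.2 / R * (Q.2 - P.2) := rfl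
  unfold Gf dsq
  generalize (R - P.1) / R = a at *
  generalize -P.2 / R = b at *
  generalize tdist R P Q = t at *
  linear_combination 36 * t ^ 2 * h + 24 * t * ht

/-- The first barrier `√G - k` and its normalized gradient. -/
theorem barrier_one_grad {R l k : ℝ} (hR : 0 < R) (hl : 0 < l) {P : ℝ × ℝ} (hP : qf R P = 0)
    {Q : ℝ × ℝ} (hQ : 0 < Gf R l P Q) :
    gX (fun p => √(Gf R l P p) - k) Q
        = (6 * tdist R P Q * ((R - P.1) / R) - 2 * (Q.1 - P.1))
          / √(48 * l ^ 2 + 24 * tdist R P Q ^ 2) ∧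
    gY (fun p => √(Gf R l P p) - k) Q
        = (6 * tdist R P Q * (-P.2 / R) - 2 * (Q.2 - P.2))
          / √(48 * l ^ 2 + 24 * tdist R P Q ^ 2) := by
  have hb := ((hasPD_Gf R l P Q).sqrt hQ).sub (HasPD.const (p := Q) k)
  have hsq := grad_Gf_sq (l := l) hR hP Q
  set G₁ := 6 * tdist R P Q * ((R - P.1) / R) - 2 * (Q.1 - P.1)
  set G₂ := 6 * tdist R P Q * (-P.2 / R) - 2 * (Q.2 - P.2)
  have hs : 0 < √(Gf R l P Q) := Real.sqrt_pos.2 hQ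
  have hss : √(Gf R l P Q) ^ 2 = Gf R l P Q := Real.sq_sqrt hQ.le
  have hN : 0 < 48 * l ^ 2 + 24 * tdist R P Q ^ 2 := by positivity
  have hW : Wgraph (fun p => √(Gf R l P p) - k) Q
      = √(48 * l ^ 2 + 24 * tdist R P Q ^ 2) / (2 * √(Gf R l P Q)) := by
    unfold Wgraph
    rw [hb.pdx_eq, hb.pdy_eq, Real.sqrt_eq_iff_mul_self_eq (by positivity) (by positivity),
      ← pow_two, div_pow, Real.sq_sqrt hN.le]
    field_simp
    rw [hss]
    linear_combination hsq
  have hNs : 0 < √(48 * l ^ 2 + 24 * tdist R P Q ^ 2) := Real.sqrt_pos.2 hN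
  unfold gX gY
  rw [hW, hb.pdx_eq, hb.pdy_eq]
  constructor <;> · field_simp; ring

theorem barrier_one_div {R l k : ℝ} (hR : 0 < R) (hl : 0 < l) (hlR : 20 * l ≤ R) {P : ℝ × ℝ}
    (hP : qf R P = 0) {Q : ℝ × ℝ} (hQ : 0 < Gf R l P Q) (ht0 : 0 < tdist R P Q)
    (htl : tdist R P Q < l) :
    1 / R < pdx (gX (fun p => √(Gf R l P p) - k)) Q + pdy (gY (fun p => √(Gf R l P p) - k)) Q := by
  have hev : ∀ᶠ p in nhds Q, 0 < Gf R l P p :=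
    (contDiff_Gf R l P).continuous.continuousAt.eventually (lt_mem_nhds hQ)
  have hN : 0 < 48 * l ^ 2 + 24 * tdist R P Q ^ 2 := by positivity
  have hNs : 0 < √(48 * l ^ 2 + 24 * tdist R P Q ^ 2) := Real.sqrt_pos.2 hN
  have dN := (((HasPD.const (p := Q) (48 * l ^ 2)).add ((HasPD.const (p := Q) 24).mul
    ((hasPD_tdist R P Q).comp (hasDerivAt_pow 2 (tdist R P Q))))).sqrt hN)
  have d1 := (((HasPD.const (p := Q) 6).mul (hasPD_tdist R P Q)).mul
    (HasPD.const (p := Q) ((R - P.1) / R))).sub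
    ((HasPD.const (p := Q) 2).mul (HasPD.fst.sub (HasPD.const P.1)))
  have d2 := (((HasPD.const (p := Q) 6).mul (hasPD_tdist R P Q)).mul
    (HasPD.const (p := Q) (-P.2 / R))).sub
    ((HasPD.const (p := Q) 2).mul (HasPD.snd.sub (HasPD.const P.2)))
  rw [((d1.div dN hNs.ne').congr_nhds
      (hev.mono fun p hp => (barrier_one_grad (k := k) hR hl hP hp).1)).pdx_eq,
    ((d2.div dN hNs.ne').congr_nhds
      (hev.mono fun p hp => (barrier_one_grad (k := k) hR hl hP hp).2)).pdy_eq]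
  have h := unit_normal hR hP
  have ht : tdist R P Q = (R - P.1) / R * (Q.1 - P.1) + -P.2 / R * (Q.2 - P.2) := rfl
  have hsq := Real.sq_sqrt hN.le
  set N := √(48 * l ^ 2 + 24 * tdist R P Q ^ 2)
  set t := tdist R P Q
  have hN9 : N < 9 * l := lt_of_pow_lt_pow_left₀ 2 (by positivity) (by nlinarith)
  have hval : (96 * l ^ 2 - 48 * t ^ 2) / N ^ 3 > 1 / R := by
    rw [gt_iff_lt, div_lt_div_iff₀ hR (by positivity)]
    have h1 : N ^ 3 < (9 * l) ^ 3 := pow_lt_pow_left₀ hN9 hNs.le (by norm_num)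
    have h2 : t ^ 2 ≤ l ^ 2 := pow_le_pow_left₀ ht0.le htl.le 2
    have h3 : 48 * l ^ 2 * (20 * l) ≤ (96 * l ^ 2 - 48 * t ^ 2) * R :=
      mul_le_mul (by linarith) hlR (by positivity) (by nlinarith)
    nlinarith [pow_pos hl 3]
  refine lt_of_lt_of_eq hval ?_
  push_cast
  generalize (R - P.1) / R = a at *
  generalize -P.2 / R = b at *
  have e1 : (6 * t * a - 2 * (Q.1 - P.1)) * a + (6 * t * b - 2 * (Q.2 - P.2)) * b = 4 * t := by
    linear_combination 6 * t * h + 2 * ht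
  have e2 : 96 * l ^ 2 - 48 * t ^ 2 = (6 * a ^ 2 + 6 * b ^ 2 - 4) * N ^ 2
      - ((6 * t * a - 2 * (Q.1 - P.1)) * a + (6 * t * b - 2 * (Q.2 - P.2)) * b) * (24 * t) := by
    rw [e1, hsq]; linear_combination -6 * (48 * l ^ 2 + 24 * t ^ 2) * h
  rw [e2]
  field_simp
  ring

/-- First step of the boundary estimate: a lower bound for `f` on the part `l/2 ≤ tdist ≤ l` of
`{Gf ≥ 0}`, which stays away from the arc, propagates up to the arc. -/
theorem lower_bound {R r r' l K₀ : ℝ} (hr' : 0 < r') (hr'r : r' < r) (hrR : r < R) (hl : 0 < l)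
    (hlR : 20 * l ≤ R) {P : ℝ × ℝ} (hP : qf R P = 0)
    (hball : ∀ Q : ℝ × ℝ, dsq P Q ≤ 16 * l ^ 2 → Q.1 ^ 2 + Q.2 ^ 2 ≤ r' ^ 2)
    {f : ℝ × ℝ → ℝ} (hf : ContDiffOn ℝ 2 f (Dp R r))
    (hdf : ∀ p ∈ Dp R r, pdx (gX f) p + pdy (gY f) p = 1 / R) (hinf : WeakInfty R r f)
    (hΓ : ∀ Q, l / 2 ≤ tdist R P Q → tdist R P Q ≤ l → 0 ≤ Gf R l P Q → -K₀ ≤ f Q) :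
    ∀ Q ∈ Dp R r, dsq P Q < l ^ 2 → -(K₀ + 4 * l) ≤ f Q := by
  have hR : 0 < R := hr'.trans (hr'r.trans hrR)
  have ct := (contDiff_tdist R P).continuous
  have cG := (contDiff_Gf R l P).continuous
  set D : Set (ℝ × ℝ) := {Q | 0 < qf R Q ∧ 0 < Gf R l P Q ∧ tdist R P Q < l} with hDdef
  have key : ∀ Q, 0 < qf R Q → 0 ≤ Gf R l P Q → tdist R P Q < l →
      0 < tdist R P Q ∧ dsq P Q ≤ 15 * l ^ 2 := by
    intro Q h1 h2 h3
    have hd : 0 ≤ dsq P Q := by unfold dsq; positivity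
    rw [qf_eq hR hP] at h1
    have ht : 0 < tdist R P Q := by
      by_contra hneg
      push Not at hneg
      nlinarith
    refine ⟨ht, ?_⟩
    unfold Gf at h2
    nlinarith
  have kd : ∀ Q, 0 < qf R Q → 0 ≤ Gf R l P Q → tdist R P Q < l →
      Q.1 ^ 2 + Q.2 ^ 2 ≤ r' ^ 2 := fun Q h1 h2 h3 =>
    hball Q (by nlinarith [(key Q h1 h2 h3).2])
  have kDp : ∀ Q, 0 < qf R Q → Q.1 ^ 2 + Q.2 ^ 2 ≤ r' ^ 2 → Q ∈ Dp R r := by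
    intro Q h1 h2
    refine ⟨?_, h1⟩
    show Q.1 ^ 2 + Q.2 ^ 2 < r ^ 2
    nlinarith
  have hD : IsOpen D := by
    refine IsOpen.inter ?_ (IsOpen.inter ?_ ?_)
    · exact isOpen_lt continuous_const (continuous_qf R)
    · exact isOpen_lt continuous_const cG
    · exact isOpen_lt ct continuous_const
  have main := comparison_arc (b := fun Q => √(Gf R l P Q) - (K₀ + 4 * l)) (g := Gf R l P)
    (C := 1 / l) (M := -K₀) hr' hr'r hrR hD
    (fun Q hQ => kDp Q hQ.1 (kd Q hQ.1 hQ.2.1.le hQ.2.2))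
    (fun Q hQ => kd Q hQ.1 hQ.2.1.le hQ.2.2) hf hdf hinf
    (((contDiff_Gf R l P).contDiffOn.sqrt fun Q hQ => hQ.2.1.ne').sub contDiffOn_const)
    (fun Q hQ => barrier_one_div hR hl hlR hP hQ.2.1 (key Q hQ.1 hQ.2.1.le hQ.2.2).1 hQ.2.2) ?_
    ((contDiff_Gf R l P).of_le (by norm_num)).contDiffOn (fun Q hQ => hQ.2.1) (by positivity) ?_ ?_
  · intro Q hQ hdQ
    have ht : tdist R P Q < l := lt_of_pow_lt_pow_left₀ 2 hl.le
      ((tdist_sq_le hR hP Q).trans_lt hdQ)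
    have hG : 0 < Gf R l P Q := by unfold Gf; nlinarith [sq_nonneg (tdist R P Q)]
    have := main Q ⟨hQ.2, hG, ht⟩
    have := Real.sqrt_nonneg (Gf R l P Q)
    linarith
  · intro Q hQ
    have h1 := (key Q hQ.1 hQ.2.1.le hQ.2.2).1
    have : √(Gf R l P Q) ≤ 4 * l := by
      rw [Real.sqrt_le_left (by positivity)]
      have h2 : 0 ≤ dsq P Q := by unfold dsq; positivity
      have h3 := hQ.2.2
      unfold Gf
      nlinarith
    linarith
  · intro Q hQ
    obtain ⟨e1, e2⟩ := barrier_one_grad (k := K₀ + 4 * l) hR hl hP hQ.2.1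
    rw [e1, e2, (hasPD_Gf R l P Q).pdx_eq, (hasPD_Gf R l P Q).pdy_eq]
    have hsq := grad_Gf_sq (l := l) hR hP Q
    have hN : 0 < 48 * l ^ 2 + 24 * tdist R P Q ^ 2 := by positivity
    have hN2 := Real.sq_sqrt hN.le
    have hN6 : 6 * l ≤ √(48 * l ^ 2 + 24 * tdist R P Q ^ 2) := by
      apply Real.le_sqrt_of_sq_le
      nlinarith [sq_nonneg (tdist R P Q)]
    have hX := gX_sq_add_gY_sq_le f Q
    have hG := hQ.2.1
    generalize 6 * tdist R P Q * ((R - P.1) / R) - 2 * (Q.1 - P.1) = G₁ at *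
    generalize 6 * tdist R P Q * (-P.2 / R) - 2 * (Q.2 - P.2) = G₂ at *
    generalize √(48 * l ^ 2 + 24 * tdist R P Q ^ 2) = N at *
    generalize Gf R l P Q = G at *
    generalize gX f Q = x at *
    generalize gY f Q = y at *
    have hN0 : 0 < N := by linarith
    have ha2 : √(G₁ ^ 2 + G₂ ^ 2) ^ 2 = G₁ ^ 2 + G₂ ^ 2 := Real.sq_sqrt (by positivity)
    have hxa : x * G₁ + y * G₂ ≤ √(G₁ ^ 2 + G₂ ^ 2) := by
      apply Real.le_sqrt_of_sq_le
      nlinarith [sq_nonneg (x * G₂ - y * G₁),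
        mul_nonneg (sub_nonneg.2 hX) (add_nonneg (sq_nonneg G₁) (sq_nonneg G₂))]
    have ha0 := Real.sqrt_nonneg (G₁ ^ 2 + G₂ ^ 2)
    have haN : √(G₁ ^ 2 + G₂ ^ 2) ≤ N := by
      refine Real.sqrt_le_iff.2 ⟨hN0.le, by linarith⟩
    generalize √(G₁ ^ 2 + G₂ ^ 2) = a at *
    have e : (x - G₁ / N) * G₁ + (y - G₂ / N) * G₂ = (x * G₁ + y * G₂) - a ^ 2 / N := by
      rw [ha2]; field_simp; ring
    rw [e]
    have h1 : a - a ^ 2 / N ≤ 4 * G / N := by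
      rw [sub_le_iff_le_add, ← add_div, le_div_iff₀ hN0]
      nlinarith
    have h2 : 4 * G / N ≤ 1 / l * G := by
      rw [one_div, inv_mul_eq_div, div_le_div_iff₀ hN0 hl]
      nlinarith
    linarith
  · intro e he
    refine ⟨{Q | e ≤ qf R Q ∧ e ≤ Gf R l P Q ∧ tdist R P Q ≤ l / 2}, ?_, ?_, ?_⟩
    · rintro Q ⟨h1, h2, h3⟩
      exact ⟨by linarith, by linarith, by linarith⟩
    · refine (isCompact_disk r').of_isClosed_subset ?_ ?_
      · refine IsClosed.inter ?_ (IsClosed.inter ?_ ?_)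
        · exact isClosed_le continuous_const (continuous_qf R)
        · exact isClosed_le continuous_const cG
        · exact isClosed_le ct continuous_const
      · rintro Q ⟨h1, h2, h3⟩
        exact kd Q (by linarith) (by linarith) (by linarith)
    · intro Q hQ hlt h1 h2
      refine ⟨h2, h1, ?_⟩
      by_contra hneg
      push Not at hneg
      have h4 := hΓ Q hneg.le hQ.2.2.le hQ.2.1.le
      have : √(Gf R l P Q) ≤ 4 * l := by
        rw [Real.sqrt_le_left (by positivity)]
        have h2 : 0 ≤ dsq P Q := by unfold dsq; positivity
        have h3 := hQ.2.2
        unfold Gf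
        nlinarith
      linarith

/-! ### The logarithmic barrier -/

/-- The pointwise inequality behind the strict subsolution property of the logarithmic barrier;
`F` stands for `A / (qf + κ)`, the vector `(ξ, η)` for `Q - (R, 0)` and `(a, b)` for `Q - P`. -/
theorem barrier_two_ineq {R Γ δ A τ ξ η a b : ℝ} (hR : 0 < R) (hΓ : 0 < Γ) (hδ : 0 < δ)
    (hA : A = 1 / (20 * (Γ + (1 + Γ * δ) / R))) (hτ : 0 < τ)
    (h1 : τ < 2 * R * A / (1 + Γ * δ)) (h2 : τ < 2 * A / Γ)
    (hs : R ^ 2 / 2 ≤ ξ ^ 2 + η ^ 2) (hs' : ξ ^ 2 + η ^ 2 ≤ R ^ 2) (hd : a ^ 2 + b ^ 2 ≤ δ ^ 2)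
    {p q : ℝ} (hp : p = 2 * A * ξ / τ - Γ * a) (hq : q = 2 * A * η / τ - Γ * b) :
    1 / R < ((1 + q ^ 2) * (2 * A / τ - Γ + 4 * A / τ ^ 2 * ξ ^ 2)
      - p * q * (4 * A / τ ^ 2 * (ξ * η) + 4 * A / τ ^ 2 * (ξ * η))
      + (1 + p ^ 2) * (2 * A / τ - Γ + 4 * A / τ ^ 2 * η ^ 2)) / √(1 + p ^ 2 + q ^ 2) ^ 3 := by
  have hΛ : 0 < Γ + (1 + Γ * δ) / R := by positivity
  obtain ⟨Λ, hΛd⟩ : ∃ Λ, Λ = Γ + (1 + Γ * δ) / R := ⟨_, rfl⟩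
  rw [← hΛd] at hA hΛ
  have hA0 : 0 < A := by rw [hA]; positivity
  obtain ⟨F, hF⟩ : ∃ F, F = A / τ := ⟨_, rfl⟩
  have hF0 : 0 < F := by rw [hF]; positivity
  have hp : p = 2 * F * ξ - Γ * a := by rw [hp, hF]; ring
  have hq : q = 2 * F * η - Γ * b := by rw [hq, hF]; ring
  have eμ : 4 * A / τ ^ 2 = 4 * F ^ 2 * (20 * Λ) := by
    rw [hF, hA]; field_simp
  have eL : 2 * A / τ = 2 * F := by rw [hF]; ring
  have hV : 1 + Γ * δ < 2 * R * F := by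
    rw [lt_div_iff₀ (by positivity)] at h1
    rw [hF, mul_div_assoc', lt_div_iff₀ hτ]; linarith
  have hL : 0 < 2 * F - Γ := by
    rw [lt_div_iff₀ hΓ] at h2
    have : Γ < 2 * F := by rw [hF, mul_div_assoc', lt_div_iff₀ hτ]; linarith
    linarith
  have hΛR : R * Λ = R * Γ + (1 + Γ * δ) := by rw [hΛd]; field_simp
  rw [eμ, eL]
  clear eμ eL hF h1 h2 hA hΛd
  have hw : p ^ 2 + q ^ 2 ≤ (2 * F * R + Γ * δ) ^ 2 := by
    have hc : -(ξ * a + η * b) ≤ R * δ := by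
      have h3 : (ξ * a + η * b) ^ 2 ≤ (R * δ) ^ 2 := by
        have h4 : (ξ ^ 2 + η ^ 2) * (a ^ 2 + b ^ 2) ≤ R ^ 2 * δ ^ 2 :=
          mul_le_mul hs' hd (by positivity) (by positivity)
        nlinarith [sq_nonneg (ξ * b - η * a)]
      linarith [(abs_le_of_sq_le_sq' h3 (by positivity)).1]
    have e : p ^ 2 + q ^ 2 = 4 * F ^ 2 * (ξ ^ 2 + η ^ 2) + 4 * F * Γ * (-(ξ * a + η * b))
        + Γ ^ 2 * (a ^ 2 + b ^ 2) := by rw [hp, hq]; ring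
    have h5 : 4 * F ^ 2 * (ξ ^ 2 + η ^ 2) ≤ 4 * F ^ 2 * R ^ 2 := by gcongr
    have h6 : 4 * F * Γ * (-(ξ * a + η * b)) ≤ 4 * F * Γ * (R * δ) := by gcongr
    have h7 : Γ ^ 2 * (a ^ 2 + b ^ 2) ≤ Γ ^ 2 * δ ^ 2 := by gcongr
    rw [e]; linarith
  have hW2 : √(1 + p ^ 2 + q ^ 2) ^ 2 = 1 + p ^ 2 + q ^ 2 := Real.sq_sqrt (by positivity)
  have hW0 : 0 < √(1 + p ^ 2 + q ^ 2) := Real.sqrt_pos.2 (by positivity)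
  have hWV : √(1 + p ^ 2 + q ^ 2) ≤ 1 + (2 * F * R + Γ * δ) := by
    refine Real.sqrt_le_iff.2 ⟨by positivity, ?_⟩
    have : 0 ≤ 2 * F * R + Γ * δ := by positivity
    nlinarith
  generalize √(1 + p ^ 2 + q ^ 2) = W at *
  have hnum : (1 + q ^ 2) * (2 * F - Γ + 4 * F ^ 2 * (20 * Λ) * ξ ^ 2)
      - p * q * (4 * F ^ 2 * (20 * Λ) * (ξ * η) + 4 * F ^ 2 * (20 * Λ) * (ξ * η))
      + (1 + p ^ 2) * (2 * F - Γ + 4 * F ^ 2 * (20 * Λ) * η ^ 2)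
      = (2 * F - Γ) * (W ^ 2 + 1) + 80 * F ^ 2 * Λ * (ξ ^ 2 + η ^ 2)
        + 80 * F ^ 2 * Λ * (q * ξ - p * η) ^ 2 := by rw [hW2]; ring
  rw [hnum, div_lt_div_iff₀ hR (by positivity)]
  have g1 : 80 * F ^ 2 * Λ * (R ^ 2 / 2) ≤ 80 * F ^ 2 * Λ * (ξ ^ 2 + η ^ 2) := by gcongr
  have g2 : 0 ≤ 80 * F ^ 2 * Λ * (q * ξ - p * η) ^ 2 := by positivity
  have g3 : W ^ 2 ≤ (4 * F * R) ^ 2 := by gcongr; linarith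
  have g4 : Λ * W ^ 2 ≤ Λ * (4 * F * R) ^ 2 := by gcongr
  have g5 : W ^ 3 ≤ (R * (2 * F - Γ) + R * Λ) * W ^ 2 := by
    have : W * W ^ 2 ≤ (R * (2 * F - Γ) + R * Λ) * W ^ 2 := by
      gcongr
      rw [hΛR]; linarith
    calc W ^ 3 = W * W ^ 2 := by ring
      _ ≤ _ := this
  have g6 : 0 < Λ * (F * R) ^ 2 := by positivity
  have g7 : Λ * W ^ 2 + (2 * F - Γ) * W ^ 2
      < (2 * F - Γ) * (W ^ 2 + 1) + 80 * F ^ 2 * Λ * (ξ ^ 2 + η ^ 2)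
        + 80 * F ^ 2 * Λ * (q * ξ - p * η) ^ 2 := by linarith
  have g8 := mul_lt_mul_of_pos_right g7 hR
  linarith

/-- Divergence of the normalized gradient of the logarithmic barrier. -/
theorem barrier_two_div {R Γ A c κ k : ℝ} {P Q : ℝ × ℝ} (hQ : 0 < qf R Q + κ) :
    pdx (gX fun p => A * (c - Real.log (qf R p + κ)) - Γ / 2 * dsq P p - k) Q
      + pdy (gY fun p => A * (c - Real.log (qf R p + κ)) - Γ / 2 * dsq P p - k) Q
    = ((1 + (2 * A * Q.2 / (qf R Q + κ) - Γ * (Q.2 - P.2)) ^ 2)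
          * (2 * A / (qf R Q + κ) - Γ + 4 * A / (qf R Q + κ) ^ 2 * (Q.1 - R) ^ 2)
        - (2 * A * (Q.1 - R) / (qf R Q + κ) - Γ * (Q.1 - P.1))
          * (2 * A * Q.2 / (qf R Q + κ) - Γ * (Q.2 - P.2))
          * (4 * A / (qf R Q + κ) ^ 2 * ((Q.1 - R) * Q.2)
            + 4 * A / (qf R Q + κ) ^ 2 * ((Q.1 - R) * Q.2))
        + (1 + (2 * A * (Q.1 - R) / (qf R Q + κ) - Γ * (Q.1 - P.1)) ^ 2)
          * (2 * A / (qf R Q + κ) - Γ + 4 * A / (qf R Q + κ) ^ 2 * Q.2 ^ 2))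
      / √(1 + (2 * A * (Q.1 - R) / (qf R Q + κ) - Γ * (Q.1 - P.1)) ^ 2
          + (2 * A * Q.2 / (qf R Q + κ) - Γ * (Q.2 - P.2)) ^ 2) ^ 3 := by
  set bf : ℝ × ℝ → ℝ := fun p => A * (c - Real.log (qf R p + κ)) - Γ / 2 * dsq P p - k with hbf
  have hτ : ∀ p, HasPD (fun p => qf R p + κ) (-2 * (p.1 - R)) (-2 * p.2) p := fun p =>
    ((hasPD_qf R p).add (HasPD.const (p := p) κ)).congr (by ring) (by ring)
  have hb : ∀ p, 0 < qf R p + κ → HasPD bf (2 * A * (p.1 - R) / (qf R p + κ) - Γ * (p.1 - P.1))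
      (2 * A * p.2 / (qf R p + κ) - Γ * (p.2 - P.2)) p := by
    intro p hp
    have h := (((HasPD.const (p := p) A).mul ((HasPD.const (p := p) c).sub
      ((hτ p).comp (Real.hasDerivAt_log hp.ne')))).sub
      ((HasPD.const (p := p) (Γ / 2)).mul (hasPD_dsq P p))).sub (HasPD.const (p := p) k)
    refine h.congr ?_ ?_ <;> · field_simp; ring
  have hev : ∀ᶠ p in nhds Q, 0 < qf R p + κ :=
    ((continuous_qf R).add continuous_const).continuousAt.eventually (lt_mem_nhds hQ)
  have hX : gX bf =ᶠ[nhds Q] fun q =>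
      (fun p : ℝ × ℝ => 2 * A * (p.1 - R) / (qf R p + κ) - Γ * (p.1 - P.1)) q
      / √(1 + (fun p : ℝ × ℝ => 2 * A * (p.1 - R) / (qf R p + κ) - Γ * (p.1 - P.1)) q ^ 2
        + (fun p : ℝ × ℝ => 2 * A * p.2 / (qf R p + κ) - Γ * (p.2 - P.2)) q ^ 2) :=
    hev.mono fun p hp => by simp only [gX, Wgraph, (hb p hp).pdx_eq, (hb p hp).pdy_eq]
  have hY : gY bf =ᶠ[nhds Q] fun q =>
      (fun p : ℝ × ℝ => 2 * A * p.2 / (qf R p + κ) - Γ * (p.2 - P.2)) q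
      / √(1 + (fun p : ℝ × ℝ => 2 * A * (p.1 - R) / (qf R p + κ) - Γ * (p.1 - P.1)) q ^ 2
        + (fun p : ℝ × ℝ => 2 * A * p.2 / (qf R p + κ) - Γ * (p.2 - P.2)) q ^ 2) :=
    hev.mono fun p hp => by simp only [gY, Wgraph, (hb p hp).pdx_eq, (hb p hp).pdy_eq]
  have hP1 : HasPD (fun p : ℝ × ℝ => 2 * A * (p.1 - R) / (qf R p + κ) - Γ * (p.1 - P.1))
      (2 * A / (qf R Q + κ) - Γ + 4 * A / (qf R Q + κ) ^ 2 * (Q.1 - R) ^ 2)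
      (4 * A / (qf R Q + κ) ^ 2 * ((Q.1 - R) * Q.2)) Q := by
    have h := ((((HasPD.const (p := Q) (2 * A)).mul (HasPD.fst.sub (HasPD.const R))).div (hτ Q)
      hQ.ne')).sub ((HasPD.const (p := Q) Γ).mul (HasPD.fst.sub (HasPD.const P.1)))
    refine h.congr ?_ ?_ <;> · field_simp; ring
  have hP2 : HasPD (fun p : ℝ × ℝ => 2 * A * p.2 / (qf R p + κ) - Γ * (p.2 - P.2))
      (4 * A / (qf R Q + κ) ^ 2 * ((Q.1 - R) * Q.2))
      (2 * A / (qf R Q + κ) - Γ + 4 * A / (qf R Q + κ) ^ 2 * Q.2 ^ 2) Q := by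
    have h := ((((HasPD.const (p := Q) (2 * A)).mul HasPD.snd).div (hτ Q)
      hQ.ne')).sub ((HasPD.const (p := Q) Γ).mul (HasPD.snd.sub (HasPD.const P.2)))
    refine h.congr ?_ ?_ <;> · field_simp; ring
  have := div_normalized hP1 hP2
  rw [← this]
  unfold pdx pdy
  rw [hX.fderiv_eq, hY.fderiv_eq]

/-- Second barrier: near a point `P` of the arc there is a strict subsolution `b` with `b P > M`
which exceeds `-K` only in a small neighborhood of `P`.  It does not depend on the solution to
which it is compared. -/
theorem barrier_two {R K δ : ℝ} (hR : 0 < R) (hδ : 0 < δ) {P : ℝ × ℝ} (hP : qf R P = 0) (M : ℝ) :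
    ∃ (U : Set (ℝ × ℝ)) (b : ℝ × ℝ → ℝ) (B : ℝ), IsOpen U ∧ P ∈ U ∧ M < b P ∧
      ContDiffOn ℝ 2 b U ∧ (∀ Q ∈ U, dsq P Q < δ ^ 2) ∧
      (∀ Q ∈ U, 0 < qf R Q → b Q ≤ B ∧ 1 / R < pdx (gX b) Q + pdy (gY b) Q) ∧
      ∀ e > 0, ∃ Kc ⊆ U, IsCompact Kc ∧ (∀ Q ∈ Kc, 0 < qf R Q) ∧
        ∀ Q ∈ U, -K < b Q → e ≤ qf R Q → Q ∈ Kc := by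
  obtain ⟨m, hm2, hmM⟩ : ∃ m : ℝ, 2 ≤ m ∧ M + K + 2 ≤ m :=
    ⟨max 2 (M + K + 2), le_max_left _ _, le_max_right _ _⟩
  obtain ⟨Γ, hΓ⟩ : ∃ Γ, Γ = 2 * m / δ ^ 2 := ⟨_, rfl⟩
  have hΓ0 : 0 < Γ := by rw [hΓ]; positivity
  have hΓm : Γ / 2 * δ ^ 2 = m := by rw [hΓ]; field_simp
  obtain ⟨A, hA⟩ : ∃ A, A = 1 / (20 * (Γ + (1 + Γ * δ) / R)) := ⟨_, rfl⟩
  have hA0 : 0 < A := by rw [hA]; positivity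
  obtain ⟨h, hh0, hh1, hh2, hh3⟩ : ∃ h : ℝ, 0 < h ∧ h ≤ 2 * R * A / (1 + Γ * δ) ∧
      h ≤ 2 * A / Γ ∧ h ≤ R ^ 2 / 2 :=
    ⟨min (2 * R * A / (1 + Γ * δ)) (min (2 * A / Γ) (R ^ 2 / 2)), by positivity,
      min_le_left _ _, (min_le_right _ _).trans (min_le_left _ _),
      (min_le_right _ _).trans (min_le_right _ _)⟩
  obtain ⟨κ, hκ⟩ : ∃ κ, κ = h * Real.exp (-(m / A)) := ⟨_, rfl⟩
  have hκ0 : 0 < κ := by rw [hκ]; positivity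
  have hlκ : A * (Real.log h - Real.log κ) = m := by
    rw [hκ, Real.log_mul hh0.ne' (Real.exp_pos _).ne', Real.log_exp]
    field_simp; ring
  have hκh : κ < h := by
    rw [hκ]
    have : Real.exp (-(m / A)) < 1 := Real.exp_lt_one_iff.2 (by
      have : 0 < m / A := by positivity
      linarith)
    nlinarith
  have cq := continuous_qf R
  have cd := (contDiff_dsq P).continuous
  have hd0 : ∀ Q, 0 ≤ dsq P Q := fun Q => by unfold dsq; positivity
  set b : ℝ × ℝ → ℝ := fun p => A * (Real.log h - Real.log (qf R p + κ)) - Γ / 2 * dsq P p - (K + 1)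
    with hb
  -- `-K ≤ b` confines a point of `{0 < qf}` to the interior of the domain of the barrier.
  have conf : ∀ Q, 0 < qf R Q → -K ≤ b Q → qf R Q + κ < h ∧ dsq P Q < δ ^ 2 := by
    intro Q hQ hbQ
    have h1 : 1 + Γ / 2 * dsq P Q ≤ A * (Real.log h - Real.log (qf R Q + κ)) := by
      have : b Q = A * (Real.log h - Real.log (qf R Q + κ)) - Γ / 2 * dsq P Q - (K + 1) := rfl
      linarith
    have h2 : 0 ≤ Γ / 2 * dsq P Q := mul_nonneg (by positivity) (hd0 Q)
    constructor
    · rw [← Real.log_lt_log_iff (by linarith) hh0]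
      have : 0 < Real.log h - Real.log (qf R Q + κ) := by
        by_contra hneg
        push Not at hneg
        nlinarith
      linarith
    · have h3 : Real.log κ < Real.log (qf R Q + κ) := Real.log_lt_log hκ0 (by linarith)
      have h4 : A * (Real.log h - Real.log (qf R Q + κ)) < m := by
        rw [← hlκ]; gcongr
      have : Γ / 2 * dsq P Q < Γ / 2 * δ ^ 2 := by linarith
      exact lt_of_mul_lt_mul_left this (by positivity)
  have hbC : ∀ s : Set (ℝ × ℝ), (∀ Q ∈ s, 0 < qf R Q + κ) → ContDiffOn ℝ 2 b s := by
    intro s hs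
    have c1 : ContDiff ℝ 2 (fun p => qf R p + κ) := by unfold qf; fun_prop
    have c2 := c1.contDiffOn.log (s := s) fun Q hQ => (hs Q hQ).ne'
    exact ((contDiffOn_const.mul (contDiffOn_const.sub c2)).sub
      (contDiffOn_const.mul (contDiff_dsq P).contDiffOn)).sub contDiffOn_const
  refine ⟨{Q | 0 < qf R Q + κ ∧ qf R Q + κ < h ∧ dsq P Q < δ ^ 2}, b, m - (K + 1), ?_, ?_, ?_,
    hbC _ fun Q hQ => hQ.1, fun Q hQ => hQ.2.2, ?_, ?_⟩
  · refine IsOpen.inter ?_ (IsOpen.inter ?_ ?_)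
    · exact isOpen_lt continuous_const (cq.add continuous_const)
    · exact isOpen_lt (cq.add continuous_const) continuous_const
    · exact isOpen_lt cd continuous_const
  · refine ⟨by rw [hP]; linarith, by rw [hP]; linarith, ?_⟩
    have : dsq P P = 0 := by unfold dsq; ring
    rw [this]; positivity
  · have : dsq P P = 0 := by unfold dsq; ring
    simp only [hb, hP, this, zero_add, hlκ]
    linarith
  · intro Q hQ hq
    constructor
    · have h3 : Real.log κ ≤ Real.log (qf R Q + κ) := Real.log_le_log hκ0 (by linarith)
      have h4 : A * (Real.log h - Real.log (qf R Q + κ)) ≤ m := by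
        rw [← hlκ]; gcongr
      have h2 : 0 ≤ Γ / 2 * dsq P Q := mul_nonneg (by positivity) (hd0 Q)
      simp only [hb]
      linarith
    · rw [hb, barrier_two_div hQ.1]
      have hs : qf R Q = R ^ 2 - ((Q.1 - R) ^ 2 + Q.2 ^ 2) := rfl
      exact barrier_two_ineq hR hΓ0 hδ hA hQ.1 (hQ.2.1.trans_le hh1) (hQ.2.1.trans_le hh2)
        (by linarith [hQ.2.1]) (by linarith) hQ.2.2.le rfl rfl
  · intro e he
    refine ⟨{Q | e ≤ qf R Q} ∩ b ⁻¹' Ici (-K), ?_, ?_, ?_, ?_⟩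
    · rintro Q ⟨h1, h2⟩
      have h1 : e ≤ qf R Q := h1
      exact ⟨by linarith, conf Q (by linarith) h2⟩
    · have hcl : IsClosed ({Q | e ≤ qf R Q} ∩ b ⁻¹' Ici (-K)) := by
        refine ContinuousOn.preimage_isClosed_of_isClosed (hbC _ ?_).continuousOn
          (isClosed_le continuous_const cq) isClosed_Ici
        intro Q hQ
        have hQ : e ≤ qf R Q := hQ
        linarith
      refine (isCompact_closedBall P δ).of_isClosed_subset hcl ?_
      rintro Q ⟨h1, h2⟩
      have h1 : e ≤ qf R Q := h1
      have h3 := (conf Q (by linarith) h2).2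
      unfold dsq at h3
      rw [Metric.mem_closedBall, Prod.dist_eq, max_le_iff, Real.dist_eq, Real.dist_eq]
      exact ⟨abs_le_of_sq_le_sq (by nlinarith) hδ.le, abs_le_of_sq_le_sq (by nlinarith) hδ.le⟩
    · rintro Q ⟨h1, h2⟩
      exact lt_of_lt_of_le he h1
    · intro Q hQ h1 h2
      exact ⟨h2, h1.le⟩

/-- Second step of the boundary estimate: a lower bound near a point `P` of the arc improves to
`f > M` in a neighborhood of `P` that depends on the lower bound only. -/
theorem blow_up {R r r' K δ : ℝ} (hr' : 0 < r') (hr'r : r' < r) (hrR : r < R) (hδ : 0 < δ)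
    {P : ℝ × ℝ} (hP : qf R P = 0)
    (hball : ∀ Q : ℝ × ℝ, dsq P Q < δ ^ 2 → Q.1 ^ 2 + Q.2 ^ 2 ≤ r' ^ 2) (M : ℝ) :
    ∃ V ∈ nhds P, ∀ f : ℝ × ℝ → ℝ, ContDiffOn ℝ 2 f (Dp R r) →
      (∀ p ∈ Dp R r, pdx (gX f) p + pdy (gY f) p = 1 / R) → WeakInfty R r f →
      (∀ Q ∈ Dp R r, dsq P Q < δ ^ 2 → -K ≤ f Q) → ∀ Q ∈ Dp R r, Q ∈ V → M < f Q := by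
  have hR : 0 < R := hr'.trans (hr'r.trans hrR)
  obtain ⟨U, b, B, hU, hPU, hbP, hbC, hUδ, hbU, hKc⟩ := barrier_two (K := K) hR hδ hP M
  refine ⟨U ∩ {Q | M < b Q}, inter_mem (hU.mem_nhds hPU)
    ((hbC.continuousOn.continuousAt (hU.mem_nhds hPU)).eventually (lt_mem_nhds hbP)), ?_⟩
  intro f hf hdf hinf hlow Q hQ hQV
  have hsub : U ∩ {Q | 0 < qf R Q} ⊆ Dp R r := by
    rintro p ⟨h1, h2⟩
    refine ⟨?_, h2⟩
    show p.1 ^ 2 + p.2 ^ 2 < r ^ 2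
    nlinarith [hball p (hUδ p h1)]
  have main := comparison_arc (g := fun _ => 1) (C := 0) (M := B) hr' hr'r hrR
    (hU.inter (isOpen_lt continuous_const (continuous_qf R))) hsub
    (fun p hp => hball p (hUδ p hp.1)) hf hdf hinf (hbC.mono inter_subset_left)
    (fun p hp => (hbU p hp.1 hp.2).2) (fun p hp => (hbU p hp.1 hp.2).1)
    contDiffOn_const (fun _ _ => one_pos) le_rfl ?_ ?_
  · exact lt_of_lt_of_le hQV.2 (main Q ⟨hQV.1, hQ.2⟩)
  · intro p _
    rw [(HasPD.const (p := p) 1).pdx_eq, (HasPD.const (p := p) 1).pdy_eq]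
    simp
  · intro e he
    obtain ⟨Kc, h1, h2, h3, h4⟩ := hKc e he
    refine ⟨Kc, fun p hp => ⟨h1 hp, h3 p hp⟩, h2, fun p hp hlt _ hq => h4 p hp.1 ?_ hq⟩
    exact (hlow p (hsub hp) (hUδ p hp.1)).trans_lt hlt

/-! ### The boundary estimate and its two applications -/

/-- Near a point `P` of the arc, a solution with weak boundary values `+∞` is large in a
neighborhood of `P` controlled by a lower bound for it on a fixed compact set. -/
theorem arc_estimate {R r : ℝ} (hr : 0 < r) (hrR : r < R) {P : ℝ × ℝ} (hPr : P ∈ Dk r)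
    (hP : qf R P = 0) :
    ∃ S ⊆ Dp R r, IsCompact S ∧ ∀ K₀ M : ℝ, ∃ V ∈ nhds P, ∀ f : ℝ × ℝ → ℝ,
      ContDiffOn ℝ 2 f (Dp R r) → (∀ p ∈ Dp R r, pdx (gX f) p + pdy (gY f) p = 1 / R) →
      WeakInfty R r f → (∀ Q ∈ S, -K₀ ≤ f Q) → ∀ Q ∈ Dp R r, Q ∈ V → M < f Q := by
  have hR : 0 < R := hr.trans hrR
  have hPr : P.1 ^ 2 + P.2 ^ 2 < r ^ 2 := hPr
  obtain ⟨ρ, hρ⟩ : ∃ ρ, ρ = √(P.1 ^ 2 + P.2 ^ 2) := ⟨_, rfl⟩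
  have hρ0 : 0 ≤ ρ := by rw [hρ]; positivity
  have hρ2 : ρ ^ 2 = P.1 ^ 2 + P.2 ^ 2 := by rw [hρ, Real.sq_sqrt (by positivity)]
  have hρr : ρ < r := lt_of_pow_lt_pow_left₀ 2 hr.le (by rw [hρ2]; exact hPr)
  obtain ⟨l, hl, hl1, hlR⟩ : ∃ l : ℝ, 0 < l ∧ 4 * l ≤ (r - ρ) / 2 ∧ 20 * l ≤ R := by
    have h1 : 0 < (r - ρ) / 8 := by linarith
    refine ⟨min ((r - ρ) / 8) (R / 20), lt_min h1 (by positivity), ?_, ?_⟩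
    · linarith [min_le_left ((r - ρ) / 8) (R / 20)]
    · linarith [min_le_right ((r - ρ) / 8) (R / 20)]
  have hball : ∀ Q : ℝ × ℝ, dsq P Q ≤ 16 * l ^ 2 → Q.1 ^ 2 + Q.2 ^ 2 ≤ ((ρ + r) / 2) ^ 2 := by
    intro Q hQ
    have hc : P.1 * (Q.1 - P.1) + P.2 * (Q.2 - P.2) ≤ ρ * (4 * l) := by
      have h3 : (P.1 * (Q.1 - P.1) + P.2 * (Q.2 - P.2)) ^ 2 ≤ (ρ * (4 * l)) ^ 2 := by
        have h4 : (P.1 ^ 2 + P.2 ^ 2) * dsq P Q ≤ ρ ^ 2 * (16 * l ^ 2) := by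
          rw [hρ2]; gcongr
        unfold dsq at h4
        nlinarith [sq_nonneg (P.1 * (Q.2 - P.2) - P.2 * (Q.1 - P.1))]
      exact (abs_le_of_sq_le_sq' h3 (by positivity)).2
    have h5 : Q.1 ^ 2 + Q.2 ^ 2 ≤ (ρ + 4 * l) ^ 2 := by
      unfold dsq at hQ
      nlinarith
    refine h5.trans (pow_le_pow_left₀ (by positivity) (by linarith) 2)
  have ct := (contDiff_tdist R P).continuous
  have cG := (contDiff_Gf R l P).continuous
  have hSd : ∀ Q, tdist R P Q ≤ l → l / 2 ≤ tdist R P Q → 0 ≤ Gf R l P Q →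
      dsq P Q ≤ 15 * l ^ 2 := by
    intro Q h1 h2 h3
    unfold Gf at h3
    nlinarith
  refine ⟨{Q | l / 2 ≤ tdist R P Q ∧ tdist R P Q ≤ l ∧ 0 ≤ Gf R l P Q}, ?_, ?_, ?_⟩
  · rintro Q ⟨h1, h2, h3⟩
    have h4 := hSd Q h2 h1 h3
    constructor
    · show Q.1 ^ 2 + Q.2 ^ 2 < r ^ 2
      refine (hball Q (by nlinarith)).trans_lt ?_
      exact pow_lt_pow_left₀ (by linarith) (by linarith) (by norm_num)
    · rw [qf_eq hR hP]
      nlinarith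
  · refine (isCompact_disk ((ρ + r) / 2)).of_isClosed_subset ?_ ?_
    · refine IsClosed.inter ?_ (IsClosed.inter ?_ ?_)
      · exact isClosed_le continuous_const ct
      · exact isClosed_le ct continuous_const
      · exact isClosed_le continuous_const cG
    · rintro Q ⟨h1, h2, h3⟩
      exact hball Q (by nlinarith [hSd Q h2 h1 h3])
  · intro K₀ M
    obtain ⟨V, hV, hVf⟩ := blow_up (K := K₀ + 4 * l) (r' := (ρ + r) / 2) (r := r) (by linarith)
      (by linarith) hrR hl hP (fun Q hQ => hball Q (by nlinarith)) M
    refine ⟨V, hV, fun f hf hdf hinf hS => hVf f hf hdf hinf ?_⟩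
    exact lower_bound (r' := (ρ + r) / 2) (by linarith) (by linarith) hrR hl hlR hP hball hf hdf
      hinf fun Q h1 h2 h3 => hS Q ⟨h1, h2, h3⟩

/-- A solution with weak boundary values `+∞` tends to `+∞` on the arc. -/
theorem tendsto_of_weakInfty {R r : ℝ} (hr : 0 < r) (hrR : r < R) {f : ℝ × ℝ → ℝ}
    (hf : ContDiffOn ℝ 2 f (Dp R r))
    (hdf : ∀ p ∈ Dp R r, pdx (gX f) p + pdy (gY f) p = 1 / R) (hinf : WeakInfty R r f)
    {P : ℝ × ℝ} (hPr : P ∈ Dk r) (hP : qf R P = 0) (M : ℝ) :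
    ∀ᶠ Q in nhds P, Q ∈ Dp R r → M < f Q := by
  obtain ⟨S, hSD, hS, hmain⟩ := arc_estimate hr hrR hPr hP
  obtain ⟨k, hk⟩ := hS.bddBelow_image (hf.continuousOn.mono hSD)
  obtain ⟨V, hV, hVf⟩ := hmain (-k) M
  filter_upwards [hV] with Q hQ hQD
  refine hVf f hf hdf hinf (fun Q hQ => ?_) Q hQD hQ
  rw [neg_neg]
  exact hk (mem_image_of_mem f hQ)

/-- The limit of solutions with boundary values `+∞` has boundary values `+∞`. -/
theorem tendsto_of_limit {R r : ℝ} (hr : 0 < r) (hrR : r < R) {u : ℕ → ℝ × ℝ → ℝ}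
    {v : ℝ × ℝ → ℝ} (hu : ∀ n, ContDiffOn ℝ 2 (u n) (Dp R r))
    (hdu : ∀ n, ∀ p ∈ Dp R r, pdx (gX (u n)) p + pdy (gY (u n)) p = 1 / R)
    (hinf : ∀ n, WeakInfty R r (u n)) (hv : ContinuousOn v (Dp R r))
    (hconv : ∀ K, IsCompact K → K ⊆ Dp R r → TendstoUniformlyOn u v atTop K)
    {P : ℝ × ℝ} (hPr : P ∈ Dk r) (hP : qf R P = 0) (M : ℝ) :
    ∀ᶠ Q in nhds P, Q ∈ Dp R r → M < v Q := by
  obtain ⟨S, hSD, hS, hmain⟩ := arc_estimate hr hrR hPr hP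
  obtain ⟨k, hk⟩ := hS.bddBelow_image (hv.mono hSD)
  obtain ⟨V, hV, hVf⟩ := hmain (1 - k) (M + 1)
  filter_upwards [hV] with Q hQ hQD
  have h1 := Metric.tendstoUniformlyOn_iff.1 (hconv S hS hSD) 1 one_pos
  have hlim : Tendsto (fun n => u n Q) atTop (nhds (v Q)) :=
    (hconv {Q} isCompact_singleton (singleton_subset_iff.2 hQD)).tendsto_at (mem_singleton Q)
  have h2 : M + 1 ≤ v Q := by
    refine ge_of_tendsto hlim ?_
    filter_upwards [h1] with n hn
    refine (hVf (u n) (hu n) (hdu n) (hinf n) (fun p hp => ?_) Q hQD hQ).le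
    have h3 := hn p hp
    have h4 : k ≤ v p := hk (mem_image_of_mem v hp)
    rw [Real.dist_eq] at h3
    linarith [(abs_lt.1 h3).2]
  linarith

/-- The limit has weak boundary values `+∞` when the arc is a divergence line. -/
theorem weakInfty_of_divergence {R r : ℝ} (hr : 0 < r) (hrR : r < R) {w : ℕ → ℝ × ℝ → ℝ}
    {v : ℝ × ℝ → ℝ} (hw : ∀ n, ContDiffOn ℝ 2 (w n) (Dk r))
    (hdw : ∀ n, ∀ p ∈ Dk r, pdx (gX (w n)) p + pdy (gY (w n)) p = 1 / R)
    (hv : ContDiffOn ℝ 2 v (Dp R r))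
    (hpx : ∀ p ∈ Dp R r, Tendsto (fun n => pdx (w n) p) atTop (nhds (pdx v p)))
    (hpy : ∀ p ∈ Dp R r, Tendsto (fun n => pdy (w n) p) atTop (nhds (pdy v p)))
    {z₁ : ℝ × ℝ} (hz : ∀ q ∈ Dk r, qf R q = 0 → dsq z₁ q = R ^ 2)
    (hN : ∀ Q ∈ Dk r, qf R Q = 0 → Tendsto (fun n => normalVec (w n) Q) atTop
      (nhds (1 / R * (z₁.1 - Q.1), 1 / R * (z₁.2 - Q.2), 0))) :
    WeakInfty R r v := by
  have hR : 0 < R := hr.trans hrR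
  -- The circle is determined by three points of the arc: `0` and `(x, ± y)`.
  have hz1 : z₁.1 = R ∧ z₁.2 = 0 := by
    obtain ⟨x, hx⟩ : ∃ x, x = r ^ 2 / (4 * R) := ⟨_, rfl⟩
    have hx0 : 0 < x := by rw [hx]; positivity
    have hxr : 4 * R * x = r ^ 2 := by rw [hx]; field_simp
    have hxR : x < 2 * R := by nlinarith
    have hy2 : √(2 * R * x - x ^ 2) ^ 2 = 2 * R * x - x ^ 2 := Real.sq_sqrt (by nlinarith)
    have hy0 : 0 < √(2 * R * x - x ^ 2) := Real.sqrt_pos.2 (by nlinarith)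
    generalize √(2 * R * x - x ^ 2) = y at *
    have e0 := hz (0, 0) (by show (0:ℝ) ^ 2 + 0 ^ 2 < r ^ 2; nlinarith) (by simp [qf])
    have e1 := hz (x, y) (by show x ^ 2 + y ^ 2 < r ^ 2; nlinarith) (by simp [qf]; nlinarith)
    have e2 := hz (x, -y) (by show x ^ 2 + (-y) ^ 2 < r ^ 2; nlinarith) (by simp [qf]; nlinarith)
    unfold dsq at e0 e1 e2
    simp only at e0 e1 e2
    have h2 : z₁.2 = 0 := by
      have : y * z₁.2 = 0 := by linarith
      exact (mul_eq_zero.1 this).resolve_left hy0.ne'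
    refine ⟨?_, h2⟩
    rw [h2] at e0 e1
    have : x * (z₁.1 - R) = 0 := by linarith
    linarith [(mul_eq_zero.1 this).resolve_left hx0.ne']
  refine weakInfty_of_flux hr hrR hv fun φ hφ K hK hKD hφz =>
    flux_limit hr hrR hw hdw hv ?_ ?_ ?_ ?_ hφ hK hKD hφz
  · intro p hp
    have hWp := Wgraph_pos v p
    exact (hpx p hp).div (((((hpx p hp).pow 2).const_add 1).add ((hpy p hp).pow 2)).sqrt) hWp.ne'
  · intro p hp
    have hWp := Wgraph_pos v p
    exact (hpy p hp).div (((((hpx p hp).pow 2).const_add 1).add ((hpy p hp).pow 2)).sqrt) hWp.ne'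
  · intro p hp hq
    have h := ((continuous_fst.tendsto _).comp (hN p hp hq)).neg
    rw [hz1.1] at h
    refine (h.congr fun n => ?_).trans (le_of_eq ?_)
    · simp [normalVec, gX, neg_div]
    · congr 1; simp only; ring
  · intro p hp hq
    have h := (((continuous_fst.comp continuous_snd).tendsto _).comp (hN p hp hq)).neg
    rw [hz1.2] at h
    refine (h.congr fun n => ?_).trans (le_of_eq ?_)
    · simp [normalVec, gY, neg_div]
    · congr 1; simp only [Function.comp]; ring

/-! ### Translation of the geometric hypotheses -/

theorem enorm2_lt_iff {p : ℝ × ℝ} {ρ : ℝ} (hρ : 0 < ρ) :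
    enorm2 p < ρ ↔ p.1 ^ 2 + p.2 ^ 2 < ρ ^ 2 := Real.sqrt_lt' hρ

theorem enorm2_eq_iff {p : ℝ × ℝ} {ρ : ℝ} (hρ : 0 < ρ) :
    enorm2 p = ρ ↔ p.1 ^ 2 + p.2 ^ 2 = ρ ^ 2 := by
  unfold enorm2
  rw [Real.sqrt_eq_iff_mul_self_eq (by positivity) hρ.le, ← pow_two, eq_comm]

theorem setOf_disk {r : ℝ} (hr : 0 < r) : {p : ℝ × ℝ | enorm2 p < r} = Dk r := by
  ext p; exact enorm2_lt_iff hr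

theorem mem_side_iff {R r : ℝ} (hr : 0 < r) (hR : 0 < R) (p : ℝ × ℝ) :
    (enorm2 p < r ∧ enorm2 (p - (R, 0)) < R) ↔ p ∈ Dp R r := by
  rw [enorm2_lt_iff hr, enorm2_lt_iff hR]
  show _ ↔ p.1 ^ 2 + p.2 ^ 2 < r ^ 2 ∧ 0 < R ^ 2 - ((p.1 - R) ^ 2 + p.2 ^ 2)
  simp

theorem mem_arc_iff {R r : ℝ} (hr : 0 < r) (hR : 0 < R) (p : ℝ × ℝ) :
    (enorm2 p < r ∧ enorm2 (p - (R, 0)) = R) ↔ p ∈ Dk r ∧ qf R p = 0 := by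
  rw [enorm2_lt_iff hr, enorm2_eq_iff hR]
  show _ ↔ p.1 ^ 2 + p.2 ^ 2 < r ^ 2 ∧ R ^ 2 - ((p.1 - R) ^ 2 + p.2 ^ 2) = 0
  simp [sub_eq_zero, eq_comm]

/-- Metric form of neighborhoods in terms of the Euclidean norm; the product type carries the
supremum norm. -/
theorem eventually_nhds_iff_enorm2 {P : ℝ × ℝ} {p : ℝ × ℝ → Prop} :
    (∀ᶠ Q in nhds P, p Q) ↔ ∃ δ > 0, ∀ Q, enorm2 (Q - P) < δ → p Q := by
  constructor
  · intro h
    obtain ⟨δ, hδ, h⟩ := Metric.eventually_nhds_iff.1 h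
    refine ⟨δ, hδ, fun Q hQ => h ?_⟩
    rw [enorm2_lt_iff hδ, Prod.fst_sub, Prod.snd_sub] at hQ
    rw [Prod.dist_eq, max_lt_iff, Real.dist_eq, Real.dist_eq]
    exact ⟨abs_lt_of_sq_lt_sq (by nlinarith) hδ.le, abs_lt_of_sq_lt_sq (by nlinarith) hδ.le⟩
  · rintro ⟨δ, hδ, h⟩
    have hc : Continuous fun Q : ℝ × ℝ => enorm2 (Q - P) := by unfold enorm2; fun_prop
    filter_upwards [hc.continuousAt.eventually (gt_mem_nhds (by simpa [enorm2] using hδ))] with Q hQ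
    exact h Q hQ

/-- if a sequence of solutions on `D⁺` converges (with gradients) to a
solution `u` and either (2a) every `u_n` tends to `+∞` on the convex boundary arc `C`,
or (2b) the `u_n` extend to `D(r)` with `C` a divergence line of the extensions, then
`u` tends to `+∞` at every point of `C`. -/
theorem stmt_12 (H r : ℝ) (hH : 0 < H) (hr : 0 < r) (hr' : r < 1 / (2 * H))
    (u : ℕ → ℝ × ℝ → ℝ) (v : ℝ × ℝ → ℝ)
    (hu : ∀ n, IsCMCSolution H
      {p : ℝ × ℝ | enorm2 p < r ∧ enorm2 (p - (1 / (2 * H), 0)) < 1 / (2 * H)} (u n))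
    (hv : IsCMCSolution H
      {p : ℝ × ℝ | enorm2 p < r ∧ enorm2 (p - (1 / (2 * H), 0)) < 1 / (2 * H)} v)
    (hconv : ∀ K : Set (ℝ × ℝ), IsCompact K →
      K ⊆ {p : ℝ × ℝ | enorm2 p < r ∧ enorm2 (p - (1 / (2 * H), 0)) < 1 / (2 * H)} →
      TendstoUniformlyOn (fun n p => u n p) v atTop K ∧
      TendstoUniformlyOn (fun n p => ((pdx (u n) p, pdy (u n) p) : ℝ × ℝ))
        (fun p => (pdx v p, pdy v p)) atTop K)
    (halt :
      (∀ n, ∀ P ∈ {p : ℝ × ℝ | enorm2 p < r ∧ enorm2 (p - (1 / (2 * H), 0)) = 1 / (2 * H)},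
        ∀ M : ℝ, ∃ δ > 0,
          ∀ Q ∈ {p : ℝ × ℝ | enorm2 p < r ∧ enorm2 (p - (1 / (2 * H), 0)) < 1 / (2 * H)},
            enorm2 (Q - P) < δ → u n Q > M) ∨
      (∃ w : ℕ → ℝ × ℝ → ℝ,
        (∀ n, IsCMCSolution H {p : ℝ × ℝ | enorm2 p < r} (w n)) ∧
        (∀ n, ∀ p ∈ {p : ℝ × ℝ | enorm2 p < r ∧
            enorm2 (p - (1 / (2 * H), 0)) < 1 / (2 * H)}, u n p = w n p) ∧
        IsDivergenceLine H {p : ℝ × ℝ | enorm2 p < r} w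
          {p : ℝ × ℝ | enorm2 p < r ∧ enorm2 (p - (1 / (2 * H), 0)) = 1 / (2 * H)})) :
    ∀ P ∈ {p : ℝ × ℝ | enorm2 p < r ∧ enorm2 (p - (1 / (2 * H), 0)) = 1 / (2 * H)},
      ∀ M : ℝ, ∃ δ > 0,
        ∀ Q ∈ {p : ℝ × ℝ | enorm2 p < r ∧ enorm2 (p - (1 / (2 * H), 0)) < 1 / (2 * H)},
          enorm2 (Q - P) < δ → v Q > M := by
  have hsets : {p : ℝ × ℝ | enorm2 p < r ∧ enorm2 (p - (1 / (2 * H), 0)) < 1 / (2 * H)}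
      = Dp (1 / (2 * H)) r := Set.ext (mem_side_iff hr (by positivity))
  have harc : {p : ℝ × ℝ | enorm2 p < r ∧ enorm2 (p - (1 / (2 * H), 0)) = 1 / (2 * H)}
      = {p | p ∈ Dk r ∧ qf (1 / (2 * H)) p = 0} := Set.ext (mem_arc_iff hr (by positivity))
  simp only [hsets] at hu hv hconv halt ⊢
  simp only [harc, setOf_disk hr] at halt ⊢
  have hR : 0 < 1 / (2 * H) := by positivity
  have h2H : 2 * H = 1 / (1 / (2 * H)) := by rw [one_div_one_div]
  have hdiv : ∀ {Ω : Set (ℝ × ℝ)} {f : ℝ × ℝ → ℝ}, IsOpen Ω → IsCMCSolution H Ω f → ∀ p ∈ Ω,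
      pdx (gX f) p + pdy (gY f) p = 1 / (1 / (2 * H)) := fun hΩ hf p hp => by
    rw [← h2H]; exact div_grad_eq hΩ hf hp
  unfold IsDivergenceLine at halt
  generalize 1 / (2 * H) = R at *
  have hDp := isOpen_Dp R r
  suffices hmain : ∀ P, P ∈ Dk r → qf R P = 0 → ∀ M : ℝ,
      ∀ᶠ Q in nhds P, Q ∈ Dp R r → M < v Q by
    intro P hP M
    obtain ⟨δ, hδ, h⟩ := eventually_nhds_iff_enorm2.1 (hmain P hP.1 hP.2 M)
    exact ⟨δ, hδ, fun Q hQ hQδ => h Q hQδ hQ⟩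
  intro P hPr hP M
  rcases halt with h2a | ⟨w, hw, huw, z₁, -, hz, -, -, φ, hφ, hN⟩
  · refine tendsto_of_limit hr hr' (fun n => (hu n).1) (fun n => hdiv hDp (hu n)) (fun n => ?_)
      hv.1.continuousOn (fun K hK hKD => (hconv K hK hKD).1) hPr hP M
    refine weakInfty_of_tendsto fun P hPr hP M => ?_
    obtain ⟨δ, hδ, h⟩ := h2a n P ⟨hPr, hP⟩ M
    exact eventually_nhds_iff_enorm2.2 ⟨δ, hδ, fun Q hQδ hQ => h Q hQ hQδ⟩
  · refine tendsto_of_weakInfty hr hr' hv.1 (hdiv hDp hv) ?_ hPr hP M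
    have hgrad : ∀ p ∈ Dp R r,
        Tendsto (fun n => (pdx (w (φ n)) p, pdy (w (φ n)) p)) atTop (nhds (pdx v p, pdy v p)) := by
      intro p hp
      have h := ((hconv {p} isCompact_singleton (singleton_subset_iff.2 hp)).2.tendsto_at
        (mem_singleton p)).comp hφ.tendsto_atTop
      refine h.congr fun n => ?_
      have he : u (φ n) =ᶠ[nhds p] w (φ n) := by
        filter_upwards [hDp.mem_nhds hp] with q hq using huw (φ n) q hq
      simp only [Function.comp, pdx, pdy, he.fderiv_eq]
    refine weakInfty_of_divergence hr hr' (w := fun n => w (φ n)) (z₁ := z₁)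
      (fun n => (hw (φ n)).1) (fun n => hdiv (isOpen_Dk r) (hw (φ n))) hv.1
      (fun p hp => (continuous_fst.tendsto _).comp (hgrad p hp))
      (fun p hp => (continuous_snd.tendsto _).comp (hgrad p hp)) ?_ ?_
    · intro q hq hq0
      exact (enorm2_eq_iff hR).1 (hz q ⟨hq, hq0⟩)
    · intro Q hQ hQ0
      rw [← h2H]
      exact hN Q ⟨hQ, hQ0⟩
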